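/- arXiv:1103.5619 — 7 statements merged into one kernel-verified Lean document; each statement's English description precedes it below -/
import Mathlib

section
/- For every finite group G and every positive integer d, there are only finitely many integral representations of G of dimension d up to isomorphism. Concretely: there is a finite set R of group homomorphisms G → GL_d(ℤ) such that every group homomorphism ρ : G → GL_d(ℤ) is conjugate to a member of R, i.e. there exist ρ' ∈ R and P ∈ GL_d(ℤ) with ρ(g) = P · ρ'(g) · P⁻¹ for all g ∈ G. -/
namespace JZ
open Matrix

/-- `ρ` is conjugate to a representation with entries bounded by `C`. -/
def Bd {G ι : Type*} [Fintype ι] [DecidableEq ι] (C : ℤ) (ρ : G → Matrix ι ι ℤ) : Prop :=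
  ∃ U W : Matrix ι ι ℤ, U * W = 1 ∧ W * U = 1 ∧ ∀ g i j, |(U * ρ g * W) i j| ≤ C

theorem Bd.mono {G ι : Type*} [Fintype ι] [DecidableEq ι] {C C' : ℤ} {ρ : G → Matrix ι ι ℤ}
    (h : Bd C ρ) (hC : C ≤ C') : Bd C' ρ := by
  obtain ⟨U, W, h1, h2, h3⟩ := h
  exact ⟨U, W, h1, h2, fun g i j => (h3 g i j).trans hC⟩

theorem Bd.of_rect {G ι κ : Type*} [Fintype ι] [DecidableEq ι] [Fintype κ] [DecidableEq κ]
    {C : ℤ} {ρ : G → Matrix ι ι ℤ} (e : ι ≃ κ) (U : Matrix κ ι ℤ) (W : Matrix ι κ ℤ)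
    (h1 : U * W = 1) (h2 : W * U = 1) (h : Bd C (fun g => U * ρ g * W)) : Bd C ρ := by
  obtain ⟨U', W', h1', h2', h3⟩ := h
  refine ⟨(U' * U).submatrix e id, (W * W').submatrix id e, ?_, ?_, ?_⟩
  · have : (U' * U) * (W * W') = 1 := by
      rw [Matrix.mul_assoc, ← Matrix.mul_assoc U, h1, Matrix.one_mul, h1']
    have h := congrArg (fun M => M.submatrix e e) this
    simp only [submatrix_one_equiv] at h
    rw [← h, Matrix.submatrix_mul _ _ e id e Function.bijective_id]
  · have : (W * W') * (U' * U) = 1 := by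
      rw [Matrix.mul_assoc, ← Matrix.mul_assoc W', h2', Matrix.one_mul, h2]
    rw [← Matrix.submatrix_mul _ _ id e id e.bijective, this]; simp
  · intro g i j
    have : (U' * U).submatrix e id * ρ g * (W * W').submatrix id e =
        (U' * (U * ρ g * W) * W').submatrix e e := by
      rw [show U' * (U * ρ g * W) * W' = (U' * U) * ρ g * (W * W') by simp only [Matrix.mul_assoc]]
      rfl
    rw [this]
    exact h3 g (e i) (e j)

theorem round {G m k : Type*} [Group G] [Fintype G] [Fintype m] [DecidableEq m]
    [Fintype k] [DecidableEq k] (A : G → Matrix m m ℤ) (D : G → Matrix k k ℤ)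
    (B : G → Matrix m k ℤ) (hD : ∀ g h, D (g * h) = D g * D h) (hD1 : D 1 = 1)
    (hB : ∀ g h, B (g * h) = A g * B h + B g * D h) (C : ℤ)
    (hAC : ∀ g i j, |A g i j| ≤ C) (hDC : ∀ g i j, |D g i j| ≤ C) :
    ∃ X : Matrix m k ℤ, ∀ g i j, |(B g + A g * X - X * D g) i j| ≤
      (Fintype.card m + Fintype.card k) * C := by
  set n : ℤ := ((Fintype.card G : ℕ) : ℤ) with hn
  have hn0 : 0 < n := by rw [hn]; exact_mod_cast Fintype.card_pos
  set Z : Matrix m k ℤ := ∑ h, B h * D h⁻¹ with hZ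
  have key : ∀ g, n • B g = Z * D g - A g * Z := by
    intro g
    have e1 : A g * Z = ∑ h, (B (g * h) * D (g * h)⁻¹ * D g - B g) := by
      rw [hZ, Matrix.mul_sum]
      refine Finset.sum_congr rfl fun h _ => ?_
      have : B g = B g * (D h * D h⁻¹) := by rw [← hD]; simp [hD1]
      rw [Matrix.mul_assoc (B (g * h)), ← hD]
      simp only [_root_.mul_inv_rev, inv_mul_cancel_right]
      rw [hB, Matrix.add_mul, ← Matrix.mul_assoc]
      rw [Matrix.mul_assoc (B g), ← this, add_sub_cancel_right]
    have e2 : ∑ h, B (g * h) * D (g * h)⁻¹ * D g = Z * D g := by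
      rw [hZ, Matrix.sum_mul]
      exact Equiv.sum_comp (Equiv.mulLeft g) (fun h => B h * D h⁻¹ * D g)
    rw [e1, Finset.sum_sub_distrib, e2]
    simp [hn]
  refine ⟨Z.map (· / n), fun g i j => ?_⟩
  set X := Z.map (· / n) with hX
  set R := Z.map (· % n) with hR
  have hZR : Z = n • X + R := by
    ext i j; simp [hX, hR, Int.mul_ediv_add_emod]
  have hRb : ∀ i j, |R i j| ≤ n := by
    intro i j
    have := Int.emod_nonneg (Z i j) hn0.ne'
    have := Int.emod_lt_of_pos (Z i j) hn0
    simp only [hR, Matrix.map_apply]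
    rw [abs_le]; constructor <;> linarith
  have h1 : n • (B g + A g * X - X * D g) = R * D g - A g * R := by
    rw [smul_sub, smul_add, key, hZR]
    simp only [Matrix.add_mul, Matrix.mul_add, Matrix.smul_mul, Matrix.mul_smul]
    abel
  have h2 := congrFun (congrFun h1 i) j
  have h3 : n * |(B g + A g * X - X * D g) i j| ≤ n * ((Fintype.card m + Fintype.card k) * C) := by
    rw [← abs_of_pos hn0, ← abs_mul, abs_of_pos hn0]
    have : n * (B g + A g * X - X * D g) i j = (R * D g - A g * R) i j := by
      rw [← h2]; simp
    rw [this, Matrix.sub_apply, Matrix.mul_apply, Matrix.mul_apply]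
    have a1 : |∑ x, R i x * D g x j| ≤ ∑ x : k, n * C := by
      refine (Finset.abs_sum_le_sum_abs _ _).trans (Finset.sum_le_sum fun x _ => ?_)
      rw [abs_mul]
      exact mul_le_mul (hRb _ _) (hDC _ _ _) (abs_nonneg _) hn0.le
    have a2 : |∑ x, A g i x * R x j| ≤ ∑ x : m, n * C := by
      refine (Finset.abs_sum_le_sum_abs _ _).trans (Finset.sum_le_sum fun x _ => ?_)
      rw [abs_mul, mul_comm]
      exact mul_le_mul (hRb _ _) (hAC _ _ _) (abs_nonneg _) hn0.le
    refine (abs_sub _ _).trans ?_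
    simp only [Finset.sum_const, Finset.card_univ, nsmul_eq_mul] at a1 a2
    linarith
  exact le_of_mul_le_mul_left h3 hn0

theorem block {G m k : Type*} [Group G] [Fintype G] [Fintype m] [DecidableEq m]
    [Fintype k] [DecidableEq k] (C : ℤ) (hC : 0 ≤ C)
    (hm : ∀ ρ : G →* Matrix m m ℤ, Bd C ρ) (hk : ∀ ρ : G →* Matrix k k ℤ, Bd C ρ)
    (A : G → Matrix m m ℤ) (B : G → Matrix m k ℤ) (D : G → Matrix k k ℤ)
    (h1 : fromBlocks (A 1) (B 1) 0 (D 1) = 1)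
    (hmul : ∀ g h, fromBlocks (A (g * h)) (B (g * h)) 0 (D (g * h)) =
      fromBlocks (A g) (B g) 0 (D g) * fromBlocks (A h) (B h) 0 (D h)) :
    Bd ((Fintype.card m + Fintype.card k) * C + C)
      (fun g => fromBlocks (A g) (B g) 0 (D g)) := by
  simp only [fromBlocks_multiply, fromBlocks_inj, Matrix.mul_zero, Matrix.zero_mul, add_zero,
    zero_add] at hmul
  rw [← fromBlocks_one, fromBlocks_inj] at h1
  obtain ⟨U, U', hU, hU', hUb⟩ := hm ⟨⟨A, h1.1⟩, fun g h => (hmul g h).1⟩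
  obtain ⟨V, V', hV, hV', hVb⟩ := hk ⟨⟨D, h1.2.2.2⟩, fun g h => (hmul g h).2.2.2⟩
  simp only [MonoidHom.coe_mk, OneHom.coe_mk] at hUb hVb
  obtain ⟨X, hX⟩ := round (fun g => U * A g * U') (fun g => V * D g * V') (fun g => U * B g * V')
    (by
      intro g h
      simp only [(hmul g h).2.2.2, Matrix.mul_assoc]
      rw [← Matrix.mul_assoc V' V, hV', Matrix.one_mul])
    (by simp only [h1.2.2.2, Matrix.mul_one, hV])
    (by
      intro g h
      simp only [(hmul g h).2.1, Matrix.mul_assoc, Matrix.mul_add, Matrix.add_mul]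
      rw [← Matrix.mul_assoc V' V, hV', Matrix.one_mul, ← Matrix.mul_assoc U' U, hU',
        Matrix.one_mul]) C hUb hVb
  refine ⟨fromBlocks U (-X * V) 0 V, fromBlocks U' (U' * X) 0 V', ?_, ?_, ?_⟩
  · simp only [fromBlocks_multiply, Matrix.mul_zero, Matrix.zero_mul, add_zero, zero_add, hU, hV,
      Matrix.mul_assoc, Matrix.mul_one]
    rw [← Matrix.mul_assoc U, hU]; simp
  · simp only [fromBlocks_multiply, Matrix.mul_zero, Matrix.zero_mul, add_zero, zero_add, hU', hV',
      Matrix.mul_assoc]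
    simp
  · intro g i j
    have : fromBlocks U (-X * V) 0 V * fromBlocks (A g) (B g) 0 (D g) *
        fromBlocks U' (U' * X) 0 V' = fromBlocks (U * A g * U')
          (U * B g * V' + (U * A g * U') * X - X * (V * D g * V')) 0 (V * D g * V') := by
      simp only [fromBlocks_multiply, Matrix.mul_zero, Matrix.zero_mul, add_zero, zero_add,
        Matrix.mul_assoc, Matrix.add_mul, Matrix.neg_mul, fromBlocks_inj, true_and, and_true]
      abel
    rw [this]
    have hc : (0:ℤ) ≤ (Fintype.card m + Fintype.card k) * C := by positivity
    rcases i with i | i <;> rcases j with j | j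
    · exact (hUb g i j).trans (by linarith)
    · exact (hX g i j).trans (by linarith)
    · simp; linarith
    · exact (hVb g i j).trans (by linarith)

end JZ

namespace JZ
open Matrix

theorem reducible {G : Type*} [Group G] [Fintype G] {d : ℕ} (C : ℤ) (hC : 0 ≤ C)
    (ih : ∀ n < d, ∀ ρ : G →* Matrix (Fin n) (Fin n) ℤ, Bd C ρ)
    (ρ : G →* Matrix (Fin d) (Fin d) ℤ) (S : Submodule ℤ (Fin d → ℤ))
    (hS : ∀ g, ∀ x ∈ S, ρ g *ᵥ x ∈ S) (htf : ∀ n : ℤ, n ≠ 0 → ∀ x, n • x ∈ S → x ∈ S)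
    (hb : S ≠ ⊥) (ht : S ≠ ⊤) : Bd (d * C + C) ρ := by
  have : Module.IsTorsionFree ℤ ((Fin d → ℤ) ⧸ S) := by
    refine ⟨fun r hr => ?_⟩
    rw [isSMulRegular_iff_right_eq_zero_of_smul]
    intro x
    obtain ⟨x, rfl⟩ := S.mkQ_surjective x
    intro hx
    rw [← map_smul] at hx
    simp only [Submodule.mkQ_apply, Submodule.Quotient.mk_eq_zero] at hx ⊢
    exact htf r hr.ne_zero x hx
  have : Nontrivial S := Submodule.nontrivial_iff_ne_bot.2 hb
  have : Nontrivial ((Fin d → ℤ) ⧸ S) := Submodule.Quotient.nontrivial_iff.2 ht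
  set m := Module.finrank ℤ S with hm
  set k := Module.finrank ℤ ((Fin d → ℤ) ⧸ S) with hk
  have hmk : k + m = d := by
    have := Submodule.finrank_quotient_add_finrank S
    simpa using this
  have hm0 : 0 < m := Module.finrank_pos
  have hk0 : 0 < k := Module.finrank_pos
  let bW : Module.Basis (Fin m) ℤ S := Module.finBasis ℤ S
  let bQ : Module.Basis (Fin k) ℤ ((Fin d → ℤ) ⧸ S) := Module.finBasis ℤ _
  let b := Module.Basis.sumQuot bW bQ
  let s := Pi.basisFun ℤ (Fin d)
  let U := LinearMap.toMatrix s b LinearMap.id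
  let W := LinearMap.toMatrix b s LinearMap.id
  have hUW : U * W = 1 := by
    rw [← LinearMap.toMatrix_comp, LinearMap.id_comp, LinearMap.toMatrix_id]
  have hWU : W * U = 1 := by
    rw [← LinearMap.toMatrix_comp, LinearMap.id_comp, LinearMap.toMatrix_id]
  have e : Fin d ≃ Fin m ⊕ Fin k := Fintype.equivOfCardEq (by simp; omega)
  refine Bd.of_rect e U W hUW hWU ?_
  have hσ : ∀ g, U * ρ g * W = LinearMap.toMatrix b b (Matrix.toLin' (ρ g)) := by
    intro g
    have : ρ g = LinearMap.toMatrix s s (Matrix.toLin' (ρ g)) := by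
      rw [LinearMap.toMatrix_eq_toMatrix', LinearMap.toMatrix'_toLin']
    rw [this, ← LinearMap.toMatrix_comp, ← LinearMap.toMatrix_comp, ← this]
    simp
  let σ : G → Matrix (Fin m ⊕ Fin k) (Fin m ⊕ Fin k) ℤ := fun g => U * ρ g * W
  have h21 : ∀ g, (σ g).toBlocks₂₁ = 0 := by
    intro g
    ext i j
    simp only [toBlocks₂₁, of_apply, Matrix.zero_apply, σ]
    rw [hσ, LinearMap.toMatrix_apply, Matrix.toLin'_apply]
    refine Module.Basis.sumQuot_repr_inr_of_mem bW bQ _ (hS g _ ?_) i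
    simp [b]
  have hσb : ∀ g, fromBlocks (σ g).toBlocks₁₁ (σ g).toBlocks₁₂ 0 (σ g).toBlocks₂₂ = σ g := by
    intro g
    rw [← h21 g, fromBlocks_toBlocks]
  have := block C hC (ih m (by omega)) (ih k (by omega)) (fun g => (σ g).toBlocks₁₁)
    (fun g => (σ g).toBlocks₁₂) (fun g => (σ g).toBlocks₂₂)
    (by rw [hσb]; simp [σ, hUW])
    (by
      intro g h
      rw [hσb, hσb, hσb]
      simp only [σ, map_mul, Matrix.mul_assoc]
      rw [← Matrix.mul_assoc W U, hWU, Matrix.one_mul])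
  simp only [hσb] at this
  refine this.mono (le_of_eq ?_)
  simp only [Fintype.card_fin]
  rw [← hmk]; push_cast; ring

end JZ

namespace JZ
open Matrix

theorem pigeon {d : ℕ} (c : Fin d → ℚ) (m : ℕ) (hm : 0 < m) :
    ∃ n : ℕ, 0 < n ∧ n ≤ m ^ d ∧ ∃ a : Fin d → ℤ, ∀ i, |n * c i - a i| * m < 1 := by
  have hm' : (0:ℚ) < m := by exact_mod_cast hm
  let f : ℕ → Fin d → ℤ := fun n i => ⌊Int.fract (n * c i) * m⌋
  have hmaps : ∀ n ∈ Finset.range (m ^ d + 1), f n ∈ Fintype.piFinset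
      (fun _ : Fin d => Finset.Ico (0:ℤ) m) := by
    intro n _
    rw [Fintype.mem_piFinset]
    intro i
    rw [Finset.mem_Ico]
    constructor
    · exact Int.floor_nonneg.2 (mul_nonneg (Int.fract_nonneg _) hm'.le)
    · rw [Int.floor_lt]
      have := Int.fract_lt_one (n * c i)
      push_cast
      nlinarith
  obtain ⟨x, hx, y, hy, hxy, hf⟩ := Finset.exists_ne_map_eq_of_card_lt_of_maps_to
    (by simp [Fintype.card_piFinset]) hmaps
  wlog hlt : x < y generalizing x y
  · exact this y hy x hx hxy.symm hf.symm (by omega)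
  rw [Finset.mem_range] at hx hy
  refine ⟨y - x, by omega, by omega, fun i => ⌊y * c i⌋ - ⌊x * c i⌋, fun i => ?_⟩
  have h1 : f x i = f y i := congrFun hf i
  have h2 := Int.abs_sub_lt_one_of_floor_eq_floor h1
  rw [← sub_mul, abs_mul, abs_of_pos hm', abs_sub_comm] at h2
  have e : ((y - x : ℕ) : ℚ) * c i - ((⌊y * c i⌋ - ⌊x * c i⌋ : ℤ) : ℚ) =
      Int.fract (y * c i) - Int.fract (x * c i) := by
    rw [Nat.cast_sub hlt.le, Int.fract, Int.fract]
    push_cast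
    ring
  rw [e]
  exact h2

/-- The invariant quadratic form. -/
def q {G : Type*} [Fintype G] {d : ℕ} (ρ : G → Matrix (Fin d) (Fin d) ℤ) (x : Fin d → ℤ) : ℤ :=
  ∑ g, ∑ i, (ρ g *ᵥ x) i ^ 2

/-- Minimal vectors of the invariant form. -/
def IsMin {G : Type*} [Fintype G] {d : ℕ} (ρ : G → Matrix (Fin d) (Fin d) ℤ)
    (x : Fin d → ℤ) : Prop := x ≠ 0 ∧ ∀ y, y ≠ 0 → q ρ x ≤ q ρ y

theorem q_nonneg {G : Type*} [Fintype G] {d : ℕ} (ρ : G → Matrix (Fin d) (Fin d) ℤ)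
    (x : Fin d → ℤ) : 0 ≤ q ρ x := by unfold q; positivity

theorem q_inv {G : Type*} [Group G] [Fintype G] {d : ℕ} (ρ : G →* Matrix (Fin d) (Fin d) ℤ)
    (h : G) (x : Fin d → ℤ) : q ρ (ρ h *ᵥ x) = q ρ x := by
  unfold q
  rw [← Equiv.sum_comp (Equiv.mulRight h) (fun g => ∑ i, (ρ g *ᵥ x) i ^ 2)]
  simp [Matrix.mulVec_mulVec]

theorem rho_ne {G : Type*} [Group G] {d : ℕ} (ρ : G →* Matrix (Fin d) (Fin d) ℤ)
    (h : G) (x : Fin d → ℤ) (hx : x ≠ 0) : ρ h *ᵥ x ≠ 0 := by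
  intro h0
  apply hx
  have := congrArg (fun y => ρ h⁻¹ *ᵥ y) h0
  simpa [Matrix.mulVec_mulVec, ← map_mul] using this

theorem isMin_inv {G : Type*} [Group G] [Fintype G] {d : ℕ} (ρ : G →* Matrix (Fin d) (Fin d) ℤ)
    (h : G) (x : Fin d → ℤ) (hx : IsMin ρ x) : IsMin ρ (ρ h *ᵥ x) :=
  ⟨rho_ne ρ h x hx.1, by rw [q_inv]; exact hx.2⟩

theorem q_pos {G : Type*} [Group G] [Fintype G] {d : ℕ} (ρ : G →* Matrix (Fin d) (Fin d) ℤ)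
    (x : Fin d → ℤ) (hx : x ≠ 0) : 0 < q ρ x := by
  obtain ⟨i, hi⟩ := Function.ne_iff.1 hx
  unfold q
  refine Finset.sum_pos' (fun g _ => by positivity) ⟨1, Finset.mem_univ _, ?_⟩
  refine Finset.sum_pos' (fun g _ => by positivity) ⟨i, Finset.mem_univ _, ?_⟩
  simp only [map_one, Matrix.one_mulVec]
  exact sq_pos_of_ne_zero hi

theorem exists_isMin {G : Type*} [Group G] [Fintype G] {d : ℕ} (hd : 0 < d)
    (ρ : G →* Matrix (Fin d) (Fin d) ℤ) : ∃ x, IsMin ρ x := by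
  have hne : ({x : Fin d → ℤ | x ≠ 0}).Nonempty :=
    ⟨fun _ => 1, fun h => one_ne_zero (congrFun h ⟨0, hd⟩)⟩
  let f : (Fin d → ℤ) → ℕ := fun x => (q ρ x).toNat
  refine ⟨Function.argminOn f _ hne, Function.argminOn_mem f _ hne, fun y hy => ?_⟩
  have h : f (Function.argminOn f _ hne) ≤ f y := Function.argminOn_le f _ hy
  have := q_nonneg ρ y
  have := q_nonneg ρ (Function.argminOn f _ hne)
  simp only [f] at h ⊢
  omega

theorem q_comb {G : Type*} [Fintype G] {d : ℕ} (ρ : G → Matrix (Fin d) (Fin d) ℤ)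
    (V : Matrix (Fin d) (Fin d) ℤ) (z : Fin d → ℤ) (δ : Fin d → ℚ)
    (hz : ∀ i, (z i : ℚ) = ∑ j, V i j * δ j) :
    (q ρ z : ℚ) ≤ d * ∑ j, δ j ^ 2 * q ρ (fun i => V i j) := by
  have h1 : ∀ g i, ((ρ g *ᵥ z) i : ℚ) = ∑ j, δ j * ((ρ g *ᵥ (fun i => V i j)) i : ℤ) := by
    intro g i
    simp only [Matrix.mulVec, dotProduct, Int.cast_sum, Int.cast_mul, hz, Finset.mul_sum]
    rw [Finset.sum_comm]
    exact Finset.sum_congr rfl fun _ _ => Finset.sum_congr rfl fun _ _ => by ring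
  unfold q
  push_cast
  simp only [h1, Finset.mul_sum]
  have h2 : ∀ g i, (∑ j, δ j * ((ρ g *ᵥ (fun i => V i j)) i : ℤ)) ^ 2 ≤
      ∑ j, d * (δ j ^ 2 * (((ρ g *ᵥ (fun i => V i j)) i : ℤ) : ℚ) ^ 2) := by
    intro g i
    refine sq_sum_le_card_mul_sum_sq.trans (le_of_eq ?_)
    simp only [Finset.card_univ, Fintype.card_fin, Finset.mul_sum, mul_pow]
  refine (Finset.sum_le_sum fun g _ => Finset.sum_le_sum fun i _ => h2 g i).trans (le_of_eq ?_)
  symm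
  rw [Finset.sum_comm]
  exact Finset.sum_congr rfl fun g _ => Finset.sum_comm

/-- the exponent -/
def N (d : ℕ) : ℕ := ((d + 1) ^ d).factorial

theorem exists_multiple {G : Type*} [Group G] [Fintype G] {d : ℕ}
    (ρ : G →* Matrix (Fin d) (Fin d) ℤ)
    (V : Matrix (Fin d) (Fin d) ℤ) (hV : ∀ j, IsMin ρ (fun i => V i j)) (hdet : V.det ≠ 0)
    (x : Fin d → ℤ) : ∃ a : Fin d → ℤ, V *ᵥ a = (N d : ℤ) • x := by
  have hk : (V.det : ℚ) ≠ 0 := by exact_mod_cast hdet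
  let c : Fin d → ℚ := fun i => ((V.adjugate *ᵥ x) i : ℚ) / V.det
  obtain ⟨n, hn0, hn, a, ha⟩ := pigeon c (d + 1) (by omega)
  have hc : ∀ i, ∑ j, (V i j : ℚ) * c j = x i := by
    intro i
    have h : V *ᵥ (V.adjugate *ᵥ x) = V.det • x := by
      rw [Matrix.mulVec_mulVec, Matrix.mul_adjugate, Matrix.smul_mulVec, Matrix.one_mulVec]
    have h' : ∑ j, V i j * (V.adjugate *ᵥ x) j = V.det * x i := congrFun h i
    have h'' : ∑ j, (V i j : ℚ) * ((V.adjugate *ᵥ x) j : ℤ) = V.det * x i := by exact_mod_cast h'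
    simp only [c, mul_div_assoc', ← Finset.sum_div, h'']
    field_simp
  set z : Fin d → ℤ := (n : ℤ) • x - V *ᵥ a with hz
  have hz0 : z = 0 := by
    by_contra hne
    have h1 := q_comb ρ V z (fun i => n * c i - a i) (by
      intro i
      simp only [hz, Pi.sub_apply, Pi.smul_apply, smul_eq_mul, Matrix.mulVec, dotProduct]
      push_cast
      rw [← hc i, Finset.mul_sum, ← Finset.sum_sub_distrib]
      exact Finset.sum_congr rfl fun _ _ => by ring)
    have hp := q_pos ρ z hne
    have hpq : (0:ℚ) < q ρ z := by exact_mod_cast hp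
    have h2 : ∀ j, (n * c j - a j) ^ 2 * (q ρ (fun i => V i j) : ℚ) ≤
        (1 / ((d:ℚ) + 1)) ^ 2 * q ρ z := by
      intro j
      have h3 : (q ρ (fun i => V i j) : ℚ) ≤ q ρ z := by exact_mod_cast (hV j).2 z hne
      have h4 : (0:ℚ) ≤ q ρ (fun i => V i j) := by exact_mod_cast q_nonneg ρ _
      have h5 : |n * c j - a j| ≤ 1 / ((d:ℚ) + 1) := by
        rw [le_div_iff₀ (by positivity)]
        have := ha j
        push_cast at this
        exact this.le
      have h6 : (n * c j - a j) ^ 2 ≤ (1 / ((d:ℚ) + 1)) ^ 2 := by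
        rw [← sq_abs]; gcongr
      gcongr
    have h7 := h1.trans (mul_le_mul_of_nonneg_left (Finset.sum_le_sum fun j _ => h2 j)
      (by positivity : (0:ℚ) ≤ d))
    simp only [Finset.sum_const, Finset.card_univ, Fintype.card_fin, nsmul_eq_mul] at h7
    have h8 : (d:ℚ) * (d * ((1 / ((d:ℚ) + 1)) ^ 2 * q ρ z)) =
        (d / (d + 1)) ^ 2 * q ρ z := by field_simp
    rw [h8] at h7
    have h9 : ((d:ℚ) / (d + 1)) ^ 2 < 1 := by
      rw [sq_lt_one_iff₀ (by positivity), div_lt_one (by positivity)]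
      linarith
    nlinarith
  obtain ⟨t, ht⟩ : n ∣ N d := Nat.dvd_factorial hn0 hn
  refine ⟨(t : ℤ) • a, ?_⟩
  rw [Matrix.mulVec_smul, ← sub_eq_zero.1 hz0, smul_smul, ht]
  push_cast
  rw [mul_comm]

theorem det_bound {G : Type*} [Group G] [Fintype G] {d : ℕ}
    (ρ : G →* Matrix (Fin d) (Fin d) ℤ)
    (V : Matrix (Fin d) (Fin d) ℤ) (hV : ∀ j, IsMin ρ (fun i => V i j)) :
    |V.det| ≤ (N d : ℤ) ^ d := by
  by_cases hdet : V.det = 0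
  · rw [hdet]; simp
  have := fun j => exists_multiple ρ V hV hdet (Pi.single j 1)
  choose a ha using this
  have hW : V * Matrix.of (fun i j => a j i) = (N d : ℤ) • (1 : Matrix (Fin d) (Fin d) ℤ) := by
    ext i j
    have := congrFun (ha j) i
    simp only [Matrix.mulVec, dotProduct] at this
    rw [Matrix.mul_apply]
    simp only [of_apply, this]
    simp [Matrix.one_apply, Pi.single_apply]
  have h := congrArg Matrix.det hW
  rw [Matrix.det_mul, Matrix.det_smul, Matrix.det_one, mul_one, Fintype.card_fin] at h
  have hN : 0 < N d := Nat.factorial_pos _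
  exact Int.le_of_dvd (by positivity) ((abs_dvd _ _).2 (Dvd.intro _ h))

end JZ

namespace JZ
open Matrix

theorem finite_reps (d : ℕ) (K : ℤ) : ∃ c : ℤ, 0 ≤ c ∧ ∀ V : Matrix (Fin d) (Fin d) ℤ,
    V.det ≠ 0 → |V.det| ≤ K → ∃ V₀ E : Matrix (Fin d) (Fin d) ℤ, V₀.det = V.det ∧
      V = V₀ + V.det • E ∧ (∀ i j, |V₀ i j| ≤ c) ∧ (∀ i j, |V₀.adjugate i j| ≤ c) := by
  let Vs : Set (Matrix (Fin d) (Fin d) ℤ) := {V | V.det ≠ 0 ∧ |V.det| ≤ K}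
  let f : Matrix (Fin d) (Fin d) ℤ → ℤ × (Fin d → Fin d → ℤ) :=
    fun V => (V.det, fun i j => V i j % V.det)
  have hfin : (f '' Vs).Finite := by
    have h1 : (Set.Icc (-K) K ×ˢ (Set.univ.pi fun _ : Fin d => Set.univ.pi fun _ : Fin d =>
        Set.Icc (0:ℤ) K)).Finite :=
      (Set.finite_Icc _ _).prod (Set.Finite.pi fun _ => Set.Finite.pi fun _ => Set.finite_Icc _ _)
    refine h1.subset ?_
    rintro _ ⟨V, ⟨h0, hK⟩, rfl⟩
    refine ⟨abs_le.1 hK, fun i _ j _ => ⟨Int.emod_nonneg _ h0, ?_⟩⟩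
    exact ((Int.emod_lt_abs _ h0).le).trans hK
  let F := Function.invFunOn f Vs '' (f '' Vs)
  have hF : F.Finite := hfin.image _
  obtain ⟨c, hc⟩ : ∃ c : ℤ, ∀ V ∈ F, ∀ i j, |V i j| ≤ c ∧ |V.adjugate i j| ≤ c := by
    obtain ⟨c, hc⟩ := (hF.image (fun V => ∑ i, ∑ j, (|V i j| + |V.adjugate i j|))).bddAbove
    refine ⟨c, fun V hV i j => ?_⟩
    have h1 : ∑ i, ∑ j, (|V i j| + |V.adjugate i j|) ≤ c := hc ⟨V, hV, rfl⟩
    have h2 : |V i j| + |V.adjugate i j| ≤ ∑ j, (|V i j| + |V.adjugate i j|) :=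
      Finset.single_le_sum (f := fun j => |V i j| + |V.adjugate i j|)
        (fun _ _ => by positivity) (Finset.mem_univ j)
    have h3 : ∑ j, (|V i j| + |V.adjugate i j|) ≤ ∑ i, ∑ j, (|V i j| + |V.adjugate i j|) :=
      Finset.single_le_sum (f := fun i => ∑ j, (|V i j| + |V.adjugate i j|))
        (fun _ _ => by positivity) (Finset.mem_univ i)
    have := abs_nonneg (V i j)
    have := abs_nonneg (V.adjugate i j)
    constructor <;> linarith
  refine ⟨max c 0, le_max_right _ _, fun V h0 hK => ?_⟩
  have hV : f V ∈ f '' Vs := ⟨V, ⟨h0, hK⟩, rfl⟩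
  have hV₀ : Function.invFunOn f Vs (f V) ∈ F := ⟨_, hV, rfl⟩
  have heq : f (Function.invFunOn f Vs (f V)) = f V := Function.invFunOn_eq hV
  set V₀ := Function.invFunOn f Vs (f V)
  have hdet : V₀.det = V.det := congrArg Prod.fst heq
  refine ⟨V₀, Matrix.of fun i j => (V i j - V₀ i j) / V.det, hdet, ?_,
    fun i j => ((hc _ hV₀ i j).1).trans (le_max_left _ _),
    fun i j => ((hc _ hV₀ i j).2).trans (le_max_left _ _)⟩
  ext i j
  have h2 : V₀ i j % V₀.det = V i j % V.det := congrFun (congrFun (congrArg Prod.snd heq) i) j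
  rw [hdet] at h2
  have h3 : V.det ∣ V i j - V₀ i j := Int.ModEq.dvd h2
  simp only [Matrix.add_apply, Matrix.smul_apply, of_apply, smul_eq_mul]
  rw [Int.mul_ediv_cancel' h3]; ring

theorem mul_bound {d : ℕ} (A B : Matrix (Fin d) (Fin d) ℤ) (a b : ℤ) (ha0 : 0 ≤ a)
    (ha : ∀ i j, |A i j| ≤ a) (hb : ∀ i j, |B i j| ≤ b) (i j) : |(A * B) i j| ≤ d * (a * b) := by
  rw [Matrix.mul_apply]
  refine (Finset.abs_sum_le_sum_abs _ _).trans ?_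
  have : ∑ x, |A i x * B x j| ≤ ∑ x : Fin d, a * b := Finset.sum_le_sum fun x _ => by
    rw [abs_mul]
    exact mul_le_mul (ha _ _) (hb _ _) (abs_nonneg _) ha0
  simpa using this

theorem full (G : Type*) [Group G] [Fintype G] (d : ℕ) : ∃ C : ℤ, 0 ≤ C ∧
    ∀ (ρ : G →* Matrix (Fin d) (Fin d) ℤ) (V : Matrix (Fin d) (Fin d) ℤ),
      (∀ j, IsMin ρ (fun i => V i j)) → V.det ≠ 0 → Bd C ρ := by
  obtain ⟨c, hc0, hc⟩ := finite_reps d ((N d : ℤ) ^ d)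
  have hK0 : (0:ℤ) ≤ (N d : ℤ) ^ d := by positivity
  refine ⟨d * (d * (c * (N d : ℤ) ^ d) * c), by positivity, fun ρ V hV hdet => ?_⟩
  obtain ⟨V₀, E, hd0, hE, hb1, hb2⟩ := hc V hdet (det_bound ρ V hV)
  set k := V.det with hk
  let U := 1 + E * V₀.adjugate
  have hUV : U * V₀ = V := by
    simp only [U, Matrix.add_mul, Matrix.one_mul, Matrix.mul_assoc, Matrix.adjugate_mul, hd0]
    rw [Matrix.mul_smul, Matrix.mul_one, ← hE]
  have hUdet : U.det = 1 := by
    have := congrArg Matrix.det hUV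
    rw [Matrix.det_mul, hd0, ← hk] at this
    exact mul_right_cancel₀ hdet (by rw [this, one_mul])
  have hUa : U * U.adjugate = 1 := by rw [Matrix.mul_adjugate, hUdet, one_smul]
  have haU : U.adjugate * U = 1 := by rw [Matrix.adjugate_mul, hUdet, one_smul]
  refine ⟨U.adjugate, U, haU, hUa, fun g => ?_⟩
  set M := U.adjugate * ρ g * U with hM
  have hcr : ∀ i j, |(V.adjugate * (ρ g * V)) i j| ≤ (N d : ℤ) ^ d := by
    intro i j
    have h1 : (V.adjugate * (ρ g * V)) i j =
        (V.updateCol i (ρ g *ᵥ (fun i => V i j))).det := by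
      rw [← Matrix.cramer_apply, Matrix.cramer_eq_adjugate_mulVec]
      rfl
    rw [h1]
    apply det_bound ρ
    intro l
    by_cases hl : l = i
    · subst hl
      simpa using isMin_inv ρ g _ (hV j)
    · simpa [Matrix.updateCol_apply, hl] using hV l
  have key : (k * k) • M = V₀ * (V.adjugate * (ρ g * V)) * V₀.adjugate := by
    have h1 : V₀ = U.adjugate * V := by
      rw [← hUV, ← Matrix.mul_assoc, haU, Matrix.one_mul]
    have h2 : V₀ * (V.adjugate * (ρ g * V)) * V₀.adjugate
        = U.adjugate * (V * V.adjugate) * ρ g * U * (V₀ * V₀.adjugate) := by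
      have h3 : ρ g * V = ρ g * (U * V₀) := by rw [hUV]
      rw [h3]
      nth_rw 1 [h1]
      simp only [Matrix.mul_assoc]
    rw [h2, Matrix.mul_adjugate, Matrix.mul_adjugate, hd0, ← hk, hM]
    simp only [Matrix.mul_smul, Matrix.smul_mul, Matrix.mul_one, smul_smul]
  intro i j
  have h4 : |(k * k) * M i j| ≤ d * (d * (c * (N d : ℤ) ^ d) * c) := by
    have : (k * k) * M i j = (V₀ * (V.adjugate * (ρ g * V)) * V₀.adjugate) i j := by
      rw [← key]; simp
    rw [this]
    exact mul_bound _ _ _ _ (by positivity) (mul_bound _ _ _ _ hc0 hb1 hcr) hb2 i j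
  refine le_trans ?_ h4
  rw [abs_mul]
  have : 1 ≤ |k * k| := Int.one_le_abs (mul_ne_zero hdet hdet)
  nlinarith [abs_nonneg (M i j)]

theorem step {G : Type*} [Group G] [Fintype G] {d : ℕ} (hd : 0 < d)
    (ρ : G →* Matrix (Fin d) (Fin d) ℤ) :
    (∃ V : Matrix (Fin d) (Fin d) ℤ, (∀ j, IsMin ρ (fun i => V i j)) ∧ V.det ≠ 0) ∨
    ∃ S : Submodule ℤ (Fin d → ℤ), (∀ g, ∀ x ∈ S, ρ g *ᵥ x ∈ S) ∧
      (∀ n : ℤ, n ≠ 0 → ∀ x, n • x ∈ S → x ∈ S) ∧ S ≠ ⊥ ∧ S ≠ ⊤ := by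
  let ι : (Fin d → ℤ) →ₗ[ℤ] (Fin d → ℚ) := (Algebra.linearMap ℤ ℚ).compLeft (Fin d)
  have hι : ∀ x i, ι x i = (x i : ℚ) := fun x i => rfl
  let T : Submodule ℚ (Fin d → ℚ) := Submodule.span ℚ (ι '' {x | IsMin ρ x})
  by_cases hT : T = ⊤
  · left
    obtain ⟨b, hbs, hspan, hli⟩ := exists_linearIndependent ℚ (ι '' {x | IsMin ρ x})
    let B : Module.Basis b ℚ (Fin d → ℚ) := Module.Basis.mk hli (by
      rw [Subtype.range_coe, hspan]; exact hT.ge)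
    let B' : Module.Basis (Fin d) ℚ (Fin d → ℚ) :=
      B.reindex (B.indexEquiv (Pi.basisFun ℚ (Fin d)))
    have h : ∀ j, ∃ x, IsMin ρ x ∧ ι x = B' j := by
      intro j
      have : B' j ∈ b := by simp [B', B]
      obtain ⟨x, hx, hxe⟩ := hbs this
      exact ⟨x, hx, hxe⟩
    choose v hv hvB using h
    refine ⟨Matrix.of fun i j => v j i, hv, ?_⟩
    have hli' : LinearIndependent ℚ
        ((Matrix.of fun i j => v j i).map (Int.castRingHom ℚ)).col := by
      convert B'.linearIndependent using 1
      funext j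
      rw [← hvB]
      rfl
    rw [Matrix.linearIndependent_cols_iff_isUnit, Matrix.isUnit_iff_isUnit_det,
      ← RingHom.mapMatrix_apply, ← RingHom.map_det] at hli'
    intro h0
    rw [h0] at hli'
    simp at hli'
  · right
    refine ⟨(T.restrictScalars ℤ).comap ι, ?_, ?_, ?_, ?_⟩
    · intro g x hx
      let L : (Fin d → ℚ) →ₗ[ℚ] (Fin d → ℚ) := Matrix.toLin' ((ρ g).map (Int.castRingHom ℚ))
      have hL : ∀ y, L (ι y) = ι (ρ g *ᵥ y) := by
        intro y
        ext i
        simp [L, hι, Matrix.mulVec, dotProduct]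
      have hTL : T ≤ T.comap L := by
        refine Submodule.span_le.2 ?_
        rintro _ ⟨y, hy, rfl⟩
        change L (ι y) ∈ T
        rw [hL]
        exact Submodule.subset_span ⟨_, isMin_inv ρ g y hy, rfl⟩
      change ι (ρ g *ᵥ x) ∈ T
      rw [← hL]
      exact hTL hx
    · intro n hn x hx
      change ι (n • x) ∈ T at hx
      change ι x ∈ T
      have hn' : (n : ℚ) ≠ 0 := by exact_mod_cast hn
      have : ι x = (n : ℚ)⁻¹ • ι (n • x) := by
        ext i
        simp [hι, hn']
      rw [this]
      exact T.smul_mem _ hx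
    · obtain ⟨x, hx⟩ := exists_isMin hd ρ
      refine (Submodule.ne_bot_iff _).2 ⟨x, ?_, hx.1⟩
      exact Submodule.subset_span (s := ι '' {x | IsMin ρ x}) ⟨x, hx, rfl⟩
    · intro htop
      apply hT
      rw [eq_top_iff, ← (Pi.basisFun ℚ (Fin d)).span_eq, Submodule.span_le]
      rintro _ ⟨i, rfl⟩
      have : (Pi.single i 1 : Fin d → ℤ) ∈ (T.restrictScalars ℤ).comap ι := by
        rw [htop]; trivial
      change ι _ ∈ T at this
      convert! this using 1
      ext j
      rw [hι]
      simp [Pi.single_apply]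

theorem main (G : Type*) [Group G] [Fintype G] (d : ℕ) :
    ∃ C : ℤ, 0 ≤ C ∧ ∀ n ≤ d, ∀ ρ : G →* Matrix (Fin n) (Fin n) ℤ, Bd C ρ := by
  induction d with
  | zero =>
    refine ⟨0, le_rfl, fun n hn ρ => ?_⟩
    obtain rfl : n = 0 := by omega
    exact ⟨1, 1, by simp, by simp, fun g i => i.elim0⟩
  | succ d ih =>
    obtain ⟨C, hC, h⟩ := ih
    obtain ⟨C', hC', h'⟩ := full G (d + 1)
    refine ⟨((d + 1 : ℕ) * C + C) + C', by positivity, fun n hn ρ => ?_⟩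
    have h0 : 0 ≤ ((d + 1 : ℕ) : ℤ) * C := by positivity
    rcases Nat.lt_or_ge d n with hlt | hle
    · obtain rfl : n = d + 1 := by omega
      rcases step (Nat.succ_pos d) ρ with ⟨V, hV, hdet⟩ | ⟨S, h1, h2, h3, h4⟩
      · exact (h' ρ V hV hdet).mono (by linarith)
      · exact (reducible C hC (fun n hn => h n (by omega)) ρ S h1 h2 h3 h4).mono (by linarith)
    · exact (h n hle ρ).mono (by linarith)

end JZ

/-- Theorem 2.1 (Jordan–Zassenhaus type finiteness): for every finite group `G` and every
positive integer `d`, there are only finitely many integral representations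
`G → GL_d(ℤ)` of dimension `d` up to conjugacy in `GL_d(ℤ)`. -/
theorem finitely_many_integral_representations
    (G : Type*) [Group G] [Finite G] (d : ℕ) (hd : 0 < d) :
    ∃ R : Finset (G →* Matrix.GeneralLinearGroup (Fin d) ℤ),
      ∀ ρ : G →* Matrix.GeneralLinearGroup (Fin d) ℤ,
        ∃ ρ' ∈ R, ∃ P : Matrix.GeneralLinearGroup (Fin d) ℤ,
          ∀ g : G, ρ g = P * ρ' g * P⁻¹ := by
  have := Fintype.ofFinite G
  obtain ⟨C, hC, h⟩ := JZ.main G d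
  let Rs : Set (G →* Matrix.GeneralLinearGroup (Fin d) ℤ) :=
    {ρ | ∀ g i j, |(ρ g : Matrix (Fin d) (Fin d) ℤ) i j| ≤ C}
  have hfin : Rs.Finite := by
    let F : (G →* Matrix.GeneralLinearGroup (Fin d) ℤ) → (G → Fin d → Fin d → ℤ) :=
      fun ρ g i j => (ρ g : Matrix (Fin d) (Fin d) ℤ) i j
    have hF : Function.Injective F := by
      intro ρ ρ' he
      ext g i j
      exact congrFun (congrFun (congrFun he g) i) j
    have hB : {f : G → Fin d → Fin d → ℤ | ∀ g, f g ∈ {f | ∀ i, f i ∈ {f | ∀ j, f j ∈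
        Set.Icc (-C) C}}}.Finite :=
      Set.Finite.pi' fun _ => Set.Finite.pi' fun _ => Set.Finite.pi' fun _ => Set.finite_Icc _ _
    refine (hB.preimage hF.injOn).subset ?_
    intro ρ hρ g i j
    exact abs_le.1 (hρ g i j)
  refine ⟨hfin.toFinset, fun ρ => ?_⟩
  obtain ⟨U, W, hUW, hWU, hb⟩ := h d le_rfl ((Units.coeHom _).comp ρ)
  let P : Matrix.GeneralLinearGroup (Fin d) ℤ := ⟨W, U, hWU, hUW⟩
  refine ⟨(MulAut.conj P⁻¹).toMonoidHom.comp ρ, ?_, P, fun g => ?_⟩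
  · rw [Set.Finite.mem_toFinset]
    intro g i j
    exact hb g i j
  · simp [mul_assoc]
end

section
/- Let G be a finite group and ρ : G → GL_d(ℤ) a group homomorphism, viewed as an action of G on the lattice ℤ^d ⊂ ℝ^d. Then there exists a positive-definite symmetric bilinear form ⟨·,·⟩ on ℝ^d which is G-invariant (i.e. ⟨ρ(g)x, ρ(g)y⟩ = ⟨x,y⟩ for all g ∈ G and x,y ∈ ℝ^d) and such that the set of nonzero vectors of ℤ^d of minimal norm with respect to ⟨·,·⟩ spans ℝ^d over ℝ. -/
open Matrix Filter Topology

namespace InvForm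

variable {d : ℕ}

def cst (w : Fin d → ℤ) : Fin d → ℝ := fun i => (w i : ℝ)

/-- Recurrence: multiples of a vector come close to the integer lattice. -/
lemma approx (x : Fin d → ℝ) (δ : ℝ) (hδ : 0 < δ) :
    ∃ k : ℕ, 1 ≤ k ∧ ∃ w : Fin d → ℤ, ‖cst w - (k : ℝ) • x‖ < δ := by
  have hc : IsCompact (Set.Icc (0 : Fin d → ℝ) 1) := isCompact_Icc
  let u : ℕ → Fin d → ℝ := fun n i => Int.fract ((n : ℝ) * x i)
  have hu : ∀ n, u n ∈ Set.Icc (0 : Fin d → ℝ) 1 := fun n =>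
    ⟨fun i => Int.fract_nonneg _, fun i => (Int.fract_lt_one _).le⟩
  obtain ⟨a, -, φ, hφ, hl⟩ := hc.tendsto_subseq hu
  have hC := hl.cauchySeq
  rw [Metric.cauchySeq_iff] at hC
  obtain ⟨N, hN⟩ := hC δ hδ
  have h := hN N le_rfl (N+1) (by omega)
  have hlt : φ N < φ (N+1) := hφ (by omega)
  refine ⟨φ (N+1) - φ N, by omega,
    fun i => ⌊(φ (N+1) : ℝ) * x i⌋ - ⌊(φ N : ℝ) * x i⌋, ?_⟩
  rw [dist_eq_norm] at h
  refine lt_of_eq_of_lt (congrArg norm ?_) h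
  ext i
  simp only [cst, u, Function.comp, Pi.sub_apply, Pi.smul_apply, smul_eq_mul, Int.fract]
  rw [Nat.cast_sub hlt.le]
  push_cast
  ring

def b (M : Matrix (Fin d) (Fin d) ℝ) (x y : Fin d → ℝ) : ℝ := x ⬝ᵥ (M *ᵥ y)

lemma b_cont (x y : Fin d → ℝ) : Continuous fun M : Matrix (Fin d) (Fin d) ℝ => b M x y := by
  unfold b; fun_prop

lemma b_cont' (M : Matrix (Fin d) (Fin d) ℝ) : Continuous fun x => b M x x := by
  unfold b; fun_prop

lemma b_smul (M : Matrix (Fin d) (Fin d) ℝ) (c : ℝ) (x : Fin d → ℝ) :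
    b M (c • x) (c • x) = c ^ 2 * b M x x := by
  simp [b, mulVec_smul]; ring

lemma b_add (M : Matrix (Fin d) (Fin d) ℝ) (x y : Fin d → ℝ) :
    b M (x + y) (x + y) = b M x x + b M x y + b M y x + b M y y := by
  simp [b, mulVec_add]; ring

lemma b_symm {M : Matrix (Fin d) (Fin d) ℝ} (h : Mᵀ = M) (x y : Fin d → ℝ) :
    b M x y = b M y x := by
  unfold b
  rw [dotProduct_mulVec, dotProduct_comm, ← mulVec_transpose, h]

lemma b_sub_smul (M N : Matrix (Fin d) (Fin d) ℝ) (ε : ℝ) (x y : Fin d → ℝ) :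
    b (M - ε • N) x y = b M x y - ε * b N x y := by
  simp [b, sub_mulVec, smul_mulVec]

lemma b_single (M : Matrix (Fin d) (Fin d) ℝ) (i j : Fin d) :
    b M (Pi.single i 1) (Pi.single j 1) = M i j := by
  simp [b]

lemma dom {M : Matrix (Fin d) (Fin d) ℝ} (hM : ∀ x, x ≠ 0 → 0 < b M x x)
    (q : (Fin d → ℝ) → ℝ) (hq : Continuous q) (hh : ∀ (c : ℝ) x, q (c • x) = c ^ 2 * q x) :
    ∃ K > 0, ∀ x, q x ≤ K * b M x x := by
  have hc : IsCompact (Metric.sphere (0 : Fin d → ℝ) 1) := isCompact_sphere _ _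
  have hne : ∀ x ∈ Metric.sphere (0 : Fin d → ℝ) 1, x ≠ 0 := by
    rintro x hx rfl
    simp at hx
  have hcont : ContinuousOn (fun x => q x / b M x x) (Metric.sphere (0 : Fin d → ℝ) 1) :=
    hq.continuousOn.div (b_cont' M).continuousOn fun x hx => (hM x (hne x hx)).ne'
  obtain ⟨K, hK⟩ := hc.bddAbove_image hcont
  refine ⟨max K 1, by positivity, fun x => ?_⟩
  by_cases hx : x = 0
  · subst hx
    have := hh 0 0
    simp at this
    simp [this, b]
  have hn : ‖x‖ ≠ 0 := norm_ne_zero_iff.mpr hx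
  have hy : ‖x‖⁻¹ • x ∈ Metric.sphere (0 : Fin d → ℝ) 1 := by
    simp [norm_smul, hn]
  have h1 := hK (Set.mem_image_of_mem _ hy)
  have hp := hM _ (hne _ hy)
  rw [div_le_iff₀ hp, hh, b_smul] at h1
  have hs : 0 < (‖x‖⁻¹)^2 := by positivity
  have h2 : q x ≤ K * b M x x := by
    refine le_of_mul_le_mul_left ?_ hs
    linarith
  exact h2.trans (mul_le_mul_of_nonneg_right (le_max_left _ _) (hM x hx).le)

lemma posdef {M : Matrix (Fin d) (Fin d) ℝ} (hs : Mᵀ = M) (hp : ∀ x, 0 ≤ b M x x)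
    (h1 : ∀ w : Fin d → ℤ, w ≠ 0 → 1 ≤ b M (cst w) (cst w)) (x : Fin d → ℝ) (hx : x ≠ 0) :
    0 < b M x x := by
  rcases (hp x).lt_or_eq with h | h
  · exact h
  exfalso
  have hn : ‖x‖ ≠ 0 := norm_ne_zero_iff.mpr hx
  have hcross : ∀ y, b M x y = 0 := by
    intro y
    by_contra hc
    have := hp ((-(b M y y + 1) / (2 * b M x y)) • x + y)
    rw [b_add, b_smul, ← h, b_symm hs y (_ • x)] at this
    have e : b M ((-(b M y y + 1) / (2 * b M x y)) • x) y = -(b M y y + 1) / 2 := by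
      simp only [b, smul_dotProduct, smul_eq_mul] at hc ⊢
      field_simp
    rw [e] at this
    linarith
  have hc0 : Tendsto (fun z => b M z z) (𝓝 0) (𝓝 0) := by
    have := (b_cont' M).tendsto 0
    simpa [b] using this
  have hev : ∀ᶠ z in 𝓝 (0 : Fin d → ℝ), b M z z < 1 := hc0.eventually (gt_mem_nhds one_pos)
  obtain ⟨δ, hδ, hball⟩ := Metric.eventually_nhds_iff.mp hev
  obtain ⟨k, hk, w, hw⟩ := approx (‖x‖⁻¹ • x) (min δ 1) (by positivity)
  have hw0 : w ≠ 0 := by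
    rintro rfl
    have e : cst (0 : Fin d → ℤ) = 0 := by ext; simp [cst]
    rw [e, zero_sub, norm_neg, norm_smul, norm_smul] at hw
    simp [hn] at hw
    omega
  have h2 := h1 w hw0
  set z := cst w - (k : ℝ) • ‖x‖⁻¹ • x with hz
  have e : cst w = (k * ‖x‖⁻¹) • x + z := by rw [hz, smul_smul]; abel
  have hxz : b M ((k * ‖x‖⁻¹) • x) z = 0 := by
    have := hcross z
    simp only [b, smul_dotProduct] at this ⊢
    simp [this]
  rw [e, b_add, b_smul, ← h, b_symm hs z, hxz] at h2
  have := @hball z (by rw [dist_zero_right]; exact hw.trans_le (min_le_left _ _))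
  linarith

variable {G : Type*} [Group G] [Fintype G]

def avg (A : G → Matrix (Fin d) (Fin d) ℝ) (M : Matrix (Fin d) (Fin d) ℝ) :
    Matrix (Fin d) (Fin d) ℝ := ∑ g, (A g)ᵀ * M * A g

lemma b_avg (A : G → Matrix (Fin d) (Fin d) ℝ) (M : Matrix (Fin d) (Fin d) ℝ)
    (x y : Fin d → ℝ) : b (avg A M) x y = ∑ g, b M (A g *ᵥ x) (A g *ᵥ y) := by
  unfold b avg
  rw [Matrix.sum_mulVec, dotProduct_sum]
  refine Finset.sum_congr rfl fun g _ => ?_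
  rw [← mulVec_mulVec, ← mulVec_mulVec, dotProduct_mulVec, vecMul_transpose]

lemma avg_symm (A : G → Matrix (Fin d) (Fin d) ℝ) {M : Matrix (Fin d) (Fin d) ℝ}
    (h : Mᵀ = M) : (avg A M)ᵀ = avg A M := by
  simp [avg, transpose_sum, transpose_mul, h, Matrix.mul_assoc]

lemma avg_inv (A : G → Matrix (Fin d) (Fin d) ℝ) (hA : ∀ g h, A (g * h) = A g * A h)
    (M : Matrix (Fin d) (Fin d) ℝ) (h : G) (x y : Fin d → ℝ) :
    b (avg A M) (A h *ᵥ x) (A h *ᵥ y) = b (avg A M) x y := by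
  rw [b_avg, b_avg]
  simp only [mulVec_mulVec, ← hA]
  exact Fintype.sum_equiv (Equiv.mulRight h) _ _ fun g => rfl

def S (A : G → Matrix (Fin d) (Fin d) ℝ) : Set (Matrix (Fin d) (Fin d) ℝ) :=
  {M | Mᵀ = M ∧ (∀ x, 0 ≤ b M x x) ∧ (∀ g x y, b M (A g *ᵥ x) (A g *ᵥ y) = b M x y) ∧
    ∀ w : Fin d → ℤ, w ≠ 0 → 1 ≤ b M (cst w) (cst w)}

lemma S_closed (A : G → Matrix (Fin d) (Fin d) ℝ) : IsClosed (S A) := by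
  have e : S A = {M | Mᵀ = M} ∩ ((⋂ x, {M | 0 ≤ b M x x}) ∩
      ((⋂ g, ⋂ x, ⋂ y, {M | b M (A g *ᵥ x) (A g *ᵥ y) = b M x y}) ∩
      ⋂ w : Fin d → ℤ, ⋂ _ : w ≠ 0, {M | 1 ≤ b M (cst w) (cst w)})) := by
    ext M; simp [S]
  rw [e]
  refine IsClosed.inter (isClosed_eq (by fun_prop) continuous_id) (IsClosed.inter ?_
    (IsClosed.inter ?_ ?_))
  · exact isClosed_iInter fun x => isClosed_le continuous_const (b_cont _ _)
  · exact isClosed_iInter fun g => isClosed_iInter fun x => isClosed_iInter fun y =>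
      isClosed_eq (b_cont _ _) (b_cont _ _)
  · exact isClosed_iInter fun w => isClosed_iInter fun _ =>
      isClosed_le continuous_const (b_cont _ _)

lemma entry_bound {M : Matrix (Fin d) (Fin d) ℝ} (hs : Mᵀ = M) (hp : ∀ x, 0 ≤ b M x x)
    (i j : Fin d) : |M i j| ≤ M.trace := by
  have hd : ∀ i, 0 ≤ M i i := fun i => by simpa [b_single] using hp (Pi.single i 1)
  have hdt : ∀ i, M i i ≤ M.trace := fun i =>
    Finset.single_le_sum (f := fun i => M i i) (fun i _ => hd i) (Finset.mem_univ i)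
  have h1 := hp (Pi.single i 1 + Pi.single j 1)
  have h2 := hp (Pi.single i 1 + (-1 : ℝ) • Pi.single j 1)
  rw [b_add, b_symm hs (Pi.single j 1)] at h1
  rw [b_add, b_symm hs ((-1 : ℝ) • Pi.single j 1), b_smul] at h2
  have e : b M (Pi.single i 1) ((-1 : ℝ) • Pi.single j 1) = - M i j := by
    rw [← b_single M i j]; simp [b, mulVec_neg]
  rw [e] at h2
  simp only [b_single] at h1 h2
  rw [abs_le]
  constructor <;> linarith [hdt i, hdt j]

lemma avg_mem (A : G → Matrix (Fin d) (Fin d) ℝ) (hA : ∀ g h, A (g * h) = A g * A h)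
    (hA1 : A 1 = 1) : avg A 1 ∈ S A := by
  have hn : ∀ x : Fin d → ℝ, 0 ≤ b 1 x x := fun x => by
    simp only [b, one_mulVec, dotProduct]
    exact Finset.sum_nonneg fun i _ => mul_self_nonneg _
  refine ⟨avg_symm A transpose_one, fun x => ?_, avg_inv A hA 1, fun w hw => ?_⟩
  · rw [b_avg]
    exact Finset.sum_nonneg fun g _ => hn _
  · rw [b_avg]
    refine le_trans ?_ (Finset.single_le_sum (fun g _ => hn _) (Finset.mem_univ 1))
    rw [hA1, one_mulVec]
    obtain ⟨i, hi⟩ := Function.ne_iff.mp hw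
    simp only [b, one_mulVec, dotProduct]
    refine le_trans ?_ (Finset.single_le_sum (fun i _ => mul_self_nonneg _) (Finset.mem_univ i))
    have : (1 : ℤ) ≤ w i * w i := by
      have : 0 < w i * w i := mul_self_pos.mpr hi
      omega
    simp only [cst]
    exact_mod_cast this

lemma exists_min (A : G → Matrix (Fin d) (Fin d) ℝ) (hA : ∀ g h, A (g * h) = A g * A h)
    (hA1 : A 1 = 1) : ∃ M ∈ S A, ∀ N ∈ S A, M.trace ≤ N.trace := by
  set M0 := avg A 1
  have h0 : M0 ∈ S A := avg_mem A hA hA1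
  let c := M0.trace
  let T : Set (Matrix (Fin d) (Fin d) ℝ) := Set.univ.pi fun _ => Set.univ.pi fun _ => Set.Icc (-c) c
  have hT : IsCompact T := isCompact_univ_pi fun _ => isCompact_univ_pi fun _ => isCompact_Icc
  have hmem : ∀ M ∈ S A, M.trace ≤ c → M ∈ T := by
    intro M hM hc i _ j _
    exact abs_le.mp ((entry_bound hM.1 hM.2.1 i j).trans hc)
  have hK : IsCompact (T ∩ S A) := hT.inter_right (S_closed A)
  obtain ⟨M, hM, hmin⟩ := hK.exists_isMinOn ⟨M0, hmem _ h0 le_rfl, h0⟩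
    (f := fun M => M.trace) (by fun_prop)
  refine ⟨M, hM.2, fun N hN => ?_⟩
  rcases le_total N.trace c with h | h
  · exact hmin ⟨hmem N hN h, hN⟩
  · exact (hmin ⟨hmem _ h0 le_rfl, h0⟩).trans h

lemma finite_lt {M : Matrix (Fin d) (Fin d) ℝ} (hM : ∀ x, x ≠ 0 → 0 < b M x x) :
    {w : Fin d → ℤ | b M (cst w) (cst w) < 2}.Finite := by
  obtain ⟨K, hK, h⟩ := dom hM (fun x => ‖x‖ ^ 2) (by fun_prop) (fun c x => by
    simp [norm_smul, mul_pow])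
  obtain ⟨n, hn⟩ := exists_nat_ge (K * 2 + 1)
  refine (Set.finite_Icc (fun _ => -(n : ℤ)) (fun _ => (n : ℤ))).subset ?_
  intro w hw
  have h1 := h (cst w)
  have h2 : ‖cst w‖ ^ 2 ≤ K * 2 := h1.trans (mul_le_mul_of_nonneg_left (le_of_lt hw) hK.le)
  have h3 : ∀ i, |w i| ≤ (n : ℤ) := by
    intro i
    have h4 : |(w i : ℝ)| ≤ ‖cst w‖ := norm_le_pi_norm (cst w) i
    have h5 : |(w i : ℝ)| ≤ n := by nlinarith [norm_nonneg (cst w)]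
    exact_mod_cast h5
  exact ⟨fun i => (abs_le.mp (h3 i)).1, fun i => (abs_le.mp (h3 i)).2⟩

lemma main (A : G → Matrix (Fin d) (Fin d) ℝ) (hA : ∀ g h, A (g * h) = A g * A h)
    (hA1 : A 1 = 1) (hint : ∀ g (w : Fin d → ℤ), ∃ w', A g *ᵥ cst w = cst w') :
    ∃ M ∈ S A, (∀ x, x ≠ 0 → 0 < b M x x) ∧
      Submodule.span ℝ {x : Fin d → ℝ | ∃ w, x = cst w ∧ b M x x = 1} = ⊤ := by
  obtain ⟨M, hM, hmin⟩ := exists_min A hA hA1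
  have hpd := posdef hM.1 hM.2.1 hM.2.2.2
  refine ⟨M, hM, hpd, ?_⟩
  by_contra hV
  set V := Submodule.span ℝ {x : Fin d → ℝ | ∃ w, x = cst w ∧ b M x x = 1} with hVd
  obtain ⟨f, hf0, hf⟩ := Submodule.exists_le_ker_of_lt_top V (lt_top_iff_ne_top.mpr hV)
  obtain ⟨a, ha⟩ : ∃ a : Fin d → ℝ, ∀ x, f x = a ⬝ᵥ x := by
    refine ⟨fun i => f (Pi.single i 1), fun x => ?_⟩
    rw [LinearMap.pi_apply_eq_sum_univ f x]
    simp only [dotProduct, smul_eq_mul]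
    refine Finset.sum_congr rfl fun i _ => ?_
    rw [mul_comm]
    congr 2
    ext j
    simp [Pi.single_apply, eq_comm]
  let P : Matrix (Fin d) (Fin d) ℝ := vecMulVec a a
  have hP : ∀ x, b P x x = f x ^ 2 := by
    intro x
    rw [ha, b, vecMulVec_mulVec]
    simp [dotProduct_comm x a]
    ring
  have hN : ∀ x, b (avg A P) x x = ∑ g, f (A g *ᵥ x) ^ 2 := fun x => by
    rw [b_avg]; simp [hP]
  set N := avg A P
  have hNs : Nᵀ = N := avg_symm A (by ext i j; simp [P, vecMulVec, mul_comm])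
  have hN1 : ∀ x, f x ^ 2 ≤ b N x x := fun x => by
    rw [hN]
    have := Finset.single_le_sum (f := fun g => f (A g *ᵥ x) ^ 2)
      (fun g _ => sq_nonneg _) (Finset.mem_univ 1)
    simpa [hA1] using this
  have hN0 : ∀ w : Fin d → ℤ, b M (cst w) (cst w) = 1 → b N (cst w) (cst w) = 0 := by
    intro w hw
    rw [hN]
    refine Finset.sum_eq_zero fun g _ => ?_
    obtain ⟨w', hw'⟩ := hint g w
    have : A g *ᵥ cst w ∈ V :=
      Submodule.subset_span ⟨w', hw', by rw [hM.2.2.1, hw]⟩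
    have := hf this
    rw [LinearMap.mem_ker] at this
    simp [this]
  have htr : 0 < N.trace := by
    obtain ⟨i, hi⟩ : ∃ i, f (Pi.single i 1) ≠ 0 := by
      by_contra! hc
      apply hf0
      refine LinearMap.pi_ext' fun i => ?_
      ext
      simp [hc i]
    have hd : ∀ i, f (Pi.single i 1) ^ 2 ≤ N i i := fun i => by
      rw [← b_single N i i]; exact hN1 _
    exact Finset.sum_pos' (fun i _ => (sq_nonneg _).trans (hd i))
      ⟨i, Finset.mem_univ i, (by positivity : 0 < f (Pi.single i 1) ^ 2).trans_le (hd i)⟩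
  obtain ⟨K, hK, hKd⟩ := dom hpd (fun x => b N x x) (b_cont' N) (b_smul N)
  have hfin := finite_lt hpd
  have hev : ∀ᶠ ε in 𝓝[>] (0 : ℝ), ∀ w ∈ {w : Fin d → ℤ | b M (cst w) (cst w) < 2},
      w ≠ 0 → 1 ≤ b M (cst w) (cst w) - ε * b N (cst w) (cst w) := by
    rw [eventually_all_finite hfin]
    intro w _
    by_cases hw : w = 0
    · simp [hw]
    rcases (hM.2.2.2 w hw).eq_or_lt with h | h
    · filter_upwards with ε _
      rw [hN0 w h.symm]; linarith
    · have : Tendsto (fun ε : ℝ => b M (cst w) (cst w) - ε * b N (cst w) (cst w)) (𝓝 0)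
          (𝓝 (b M (cst w) (cst w) - 0 * b N (cst w) (cst w))) :=
        (by fun_prop : Continuous fun ε : ℝ =>
          b M (cst w) (cst w) - ε * b N (cst w) (cst w)).tendsto 0
      rw [zero_mul, sub_zero] at this
      filter_upwards [(this.mono_left nhdsWithin_le_nhds).eventually (lt_mem_nhds h)] with ε hε _
      exact hε.le
  have hev2 : ∀ᶠ ε in 𝓝[>] (0 : ℝ), ε < 1 / (2 * K) :=
    nhdsWithin_le_nhds (gt_mem_nhds (by positivity))
  have hev3 : ∀ᶠ ε in 𝓝[>] (0 : ℝ), 0 < ε := self_mem_nhdsWithin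
  obtain ⟨ε, h1, h2, h3⟩ := (hev.and (hev2.and hev3)).exists
  have hhalf : ∀ x, b M x x / 2 ≤ b M x x - ε * b N x x := by
    intro x
    have e1 : ε * b N x x ≤ ε * (K * b M x x) := mul_le_mul_of_nonneg_left (hKd x) h3.le
    have e2 : ε * K ≤ 1 / 2 := by
      rw [lt_div_iff₀ (by positivity)] at h2; linarith
    nlinarith [mul_le_mul_of_nonneg_right e2 (hM.2.1 x)]
  have hmem : M - ε • N ∈ S A := by
    refine ⟨by simp [hM.1, hNs], fun x => ?_, fun g x y => ?_, fun w hw => ?_⟩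
    · rw [b_sub_smul]; linarith [hhalf x, hM.2.1 x]
    · rw [b_sub_smul, b_sub_smul, hM.2.2.1, avg_inv A hA]
    · rw [b_sub_smul]
      rcases lt_or_ge (b M (cst w) (cst w)) 2 with h | h
      · exact h1 w h hw
      · linarith [hhalf (cst w)]
  have := hmin _ hmem
  rw [trace_sub, trace_smul, smul_eq_mul] at this
  nlinarith [mul_pos h3 htr]

end InvForm

/-- Key construction in the proof of Theorem 2.1: given a finite group `G` acting on the
lattice `ℤ^d ⊂ ℝ^d` via `ρ : G → GL_d(ℤ)`, there is a `G`-invariant positive-definite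
symmetric bilinear form on `ℝ^d` such that the nonzero lattice vectors of minimal norm
span `ℝ^d`. -/
theorem exists_invariant_form_with_spanning_minimal_vectors
    (G : Type*) [Group G] [Finite G] (d : ℕ)
    (ρ : G →* Matrix.GeneralLinearGroup (Fin d) ℤ) :
    ∃ B : LinearMap.BilinForm ℝ (Fin d → ℝ),
      (∀ x y : Fin d → ℝ, B x y = B y x) ∧
      (∀ x : Fin d → ℝ, x ≠ 0 → 0 < B x x) ∧
      (∀ (g : G) (x y : Fin d → ℝ),
        B (((ρ g : Matrix (Fin d) (Fin d) ℤ).map (Int.cast : ℤ → ℝ)).mulVec x)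
          (((ρ g : Matrix (Fin d) (Fin d) ℤ).map (Int.cast : ℤ → ℝ)).mulVec y) = B x y) ∧
      Submodule.span ℝ
        {x : Fin d → ℝ | ∃ v : Fin d → ℤ, v ≠ 0 ∧
          (∀ w : Fin d → ℤ, w ≠ 0 →
            B x x ≤ B (fun i => (w i : ℝ)) (fun i => (w i : ℝ))) ∧
          x = fun i => (v i : ℝ)} = ⊤ := by
  classical
  have := Fintype.ofFinite G
  let A : G → Matrix (Fin d) (Fin d) ℝ :=
    fun g => (ρ g : Matrix (Fin d) (Fin d) ℤ).map (Int.cast : ℤ → ℝ)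
  have hA : ∀ g h, A (g * h) = A g * A h := by
    intro g h
    simp only [A, map_mul, Units.val_mul]
    exact Matrix.map_mul (f := Int.castRingHom ℝ)
  have hA1 : A 1 = 1 := by
    simp [A]
  obtain ⟨M, hM, hpd, hspan⟩ := InvForm.main A hA hA1 (fun g w =>
    ⟨(ρ g : Matrix (Fin d) (Fin d) ℤ).mulVec w, by
      ext i
      simp [A, InvForm.cst, Matrix.mulVec, dotProduct]⟩)
  have hB : ∀ x y, Matrix.toBilin' M x y = InvForm.b M x y := fun x y => by
    rw [Matrix.toBilin'_apply', InvForm.b]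
  refine ⟨Matrix.toBilin' M, fun x y => ?_, fun x hx => ?_, fun g x y => ?_, ?_⟩
  · rw [hB, hB]; exact InvForm.b_symm hM.1 x y
  · rw [hB]; exact hpd x hx
  · rw [hB, hB]; exact hM.2.2.1 g x y
  · rw [eq_top_iff, ← hspan]
    refine Submodule.span_mono ?_
    rintro x ⟨w, rfl, h⟩
    refine ⟨w, ?_, fun w' hw' => ?_, rfl⟩
    · rintro rfl
      have e : InvForm.cst (0 : Fin d → ℤ) = 0 := by ext; simp [InvForm.cst]
      rw [e] at h
      simp [InvForm.b] at h
    · rw [hB, hB, h]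
      exact hM.2.2.2 w' hw'
end

section
/- Let A be an abelian group and let K, Q, S be subgroups of A. Then there is an injective group homomorphism from (KQ ∩ S)/((K∩S)(Q∩S)) into (KS ∩ Q)/((K∩Q)(S∩Q)). In particular the cardinality of the first quotient is at most that of the second. -/
theorem aux_one {B : Type*} [AddCommGroup B] (a b c d e : B) :
    a + b + -c + -(a + -d + (b + -e)) = -c + (d + e) := by abel

theorem aux_two {B : Type*} [AddCommGroup B] (s a b : B) :
    s + -(a + b) + a = s + -b := by abel

theorem aux_three {B : Type*} [AddCommGroup B] (u v g : B) :
    -(u + v + -g) + u = g + -v := by abel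

/-- Group-theoretic step in the proof of Theorem 5.1: for subgroups `K`, `Q`, `S` of an
abelian group `A`, there is an injective group homomorphism
`(KQ ∩ S)/((K∩S)(Q∩S)) ↪ (KS ∩ Q)/((K∩Q)(S∩Q))`; in particular the cardinality of the
first quotient is at most that of the second. -/
theorem quotient_inj_of_subgroups {A : Type*} [CommGroup A] (K Q S : Subgroup A) :
    ∃ f : (((K ⊔ Q) ⊓ S : Subgroup A) ⧸ ((K ⊓ S) ⊔ (Q ⊓ S)).subgroupOf ((K ⊔ Q) ⊓ S)) →*
          (((K ⊔ S) ⊓ Q : Subgroup A) ⧸ ((K ⊓ Q) ⊔ (S ⊓ Q)).subgroupOf ((K ⊔ S) ⊓ Q)),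
      Function.Injective f ∧
      Cardinal.mk (((K ⊔ Q) ⊓ S : Subgroup A) ⧸ ((K ⊓ S) ⊔ (Q ⊓ S)).subgroupOf ((K ⊔ Q) ⊓ S))
        ≤ Cardinal.mk (((K ⊔ S) ⊓ Q : Subgroup A) ⧸ ((K ⊓ Q) ⊔ (S ⊓ Q)).subgroupOf ((K ⊔ S) ⊓ Q)) := by
  have key : ∀ s : ((K ⊔ Q) ⊓ S : Subgroup A), ∃ q : ((K ⊔ S) ⊓ Q : Subgroup A),
      (s : A) * (q : A)⁻¹ ∈ K := by
    rintro ⟨s, hs, hsS⟩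
    obtain ⟨k, hk, q, hq, rfl⟩ := Subgroup.mem_sup.1 hs
    refine ⟨⟨q, ?_, hq⟩, by simpa using hk⟩
    exact Subgroup.mem_sup.2 ⟨k⁻¹, K.inv_mem hk, k * q, hsS, by simp⟩
  choose g hg using key
  have hgQ : ∀ s, (g s : A) ∈ Q := fun s => (g s).2.2
  let φ : ((K ⊔ Q) ⊓ S : Subgroup A) →*
      (((K ⊔ S) ⊓ Q : Subgroup A) ⧸ ((K ⊓ Q) ⊔ (S ⊓ Q)).subgroupOf ((K ⊔ S) ⊓ Q)) :=
    MonoidHom.mk' (fun s => QuotientGroup.mk (g s)) (by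
      intro a b
      rw [← QuotientGroup.mk_mul, QuotientGroup.eq, Subgroup.mem_subgroupOf]
      refine Subgroup.mem_sup_left ⟨?_, Q.mul_mem (Q.inv_mem (hgQ _)) (Q.mul_mem (hgQ a) (hgQ b))⟩
      have h := K.mul_mem (hg (a * b)) (K.inv_mem (K.mul_mem (hg a) (hg b)))
      have e : ((a * b : ((K ⊔ Q) ⊓ S : Subgroup A)) : A) * (g (a * b) : A)⁻¹ *
          ((a : A) * (g a : A)⁻¹ * ((b : A) * (g b : A)⁻¹))⁻¹ =
          (g (a * b) : A)⁻¹ * ((g a : A) * (g b : A)) := by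
        exact aux_one (B := Additive A) (a : A) (b : A) (g (a * b) : A) (g a : A) (g b : A)
      rw [e] at h
      exact h)
  have hφ : ∀ s, φ s = 1 ↔ (g s : A) ∈ (K ⊓ Q) ⊔ (S ⊓ Q) := by
    intro s
    change (QuotientGroup.mk (g s) : (((K ⊔ S) ⊓ Q : Subgroup A) ⧸ _)) = 1 ↔ _
    rw [QuotientGroup.eq_one_iff, Subgroup.mem_subgroupOf]
  have hker : ∀ s, φ s = 1 ↔ s ∈ ((K ⊓ S) ⊔ (Q ⊓ S)).subgroupOf ((K ⊔ Q) ⊓ S) := by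
    intro s
    rw [hφ, Subgroup.mem_subgroupOf]
    have h := hg s
    constructor
    · intro hs
      obtain ⟨a, ha, b, hb, e⟩ := Subgroup.mem_sup.1 hs
      refine Subgroup.mem_sup.2 ⟨s * b⁻¹, ⟨?_, S.mul_mem s.2.2 (S.inv_mem hb.1)⟩, b,
        ⟨hb.2, hb.1⟩, by simp⟩
      rw [← e] at h
      have := K.mul_mem h ha.1
      have e2 : (s : A) * (a * b)⁻¹ * a = s * b⁻¹ :=
        aux_two (B := Additive A) (s : A) a b
      rw [e2] at this
      exact this
    · intro hs
      obtain ⟨u, hu, v, hv, e⟩ := Subgroup.mem_sup.1 hs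
      refine Subgroup.mem_sup.2 ⟨g s * v⁻¹, ⟨?_, Q.mul_mem (hgQ s) (Q.inv_mem hv.1)⟩, v,
        ⟨hv.2, hv.1⟩, by simp⟩
      rw [← e] at h
      have := K.mul_mem (K.inv_mem h) hu.1
      have e2 : (u * v * (g s : A)⁻¹)⁻¹ * u = g s * v⁻¹ :=
        aux_three (B := Additive A) u v (g s : A)
      rw [e2] at this
      exact this
  have hinj : Function.Injective (QuotientGroup.lift _ φ (fun s hs => (hker s).2 hs)) := by
    rw [injective_iff_map_eq_one]
    intro x
    induction x using QuotientGroup.induction_on with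
    | H s =>
      intro h
      exact (QuotientGroup.eq_one_iff s).2 ((hker s).1 h)
  refine ⟨_, hinj, ?_⟩
  have := Cardinal.mk_le_of_injective hinj
  exact this
end

section
/- With the signed-permutation setup (G ≤ W_g containing δ, acting transitively on {1,…,g}×{+1,−1}, with stabilizer H of (1,+1), positive set S, and primitivity condition that every τ ∈ G with Sτ = S lies in H): for each index i with i ≠ 1 and each sign ε ∈ {+1,−1}, there exists σ ∈ S and an index j such that σ(i,+1) = (j,ε); that is, some element of S takes i somewhere with sign ε. -/
/-- The signed permutation `δ`, sending `(i, ε)` to `(i, −ε)` (complex conjugation). -/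
def signFlip (g : ℕ) : Equiv.Perm (Fin g × Bool) :=
  Equiv.prodCongr (Equiv.refl (Fin g))
    ⟨fun b => !b, fun b => !b, fun b => Bool.not_not b, fun b => Bool.not_not b⟩

/-- Lemma 7.7: in the signed-permutation setup (a subgroup `G ≤ W_g` containing `δ`,
acting transitively on `{1,…,g}×{±1}`, with `S` the set of elements of `G` sending
`(1,+1)` to some `(j,+1)`, and the primitivity condition that every `τ ∈ G` with
`Sτ = S` fixes `(1,+1)`), for each `i ≠ 1` and each sign `ε` some element of `S` takes
`i` somewhere with sign `ε`. -/
theorem exists_mem_S_with_sign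
    (g : ℕ) (hg : 0 < g) (G : Subgroup (Equiv.Perm (Fin g × Bool)))
    (hsigned : ∀ σ ∈ G, ∀ p : Fin g × Bool, σ (p.1, !p.2) = ((σ p).1, !(σ p).2))
    (hδ : signFlip g ∈ G)
    (htrans : ∀ p q : Fin g × Bool, ∃ σ ∈ G, σ p = q)
    (hprim : ∀ τ ∈ G,
      (fun σ => σ * τ) '' {σ | σ ∈ G ∧ (σ ((⟨0, hg⟩ : Fin g), true)).2 = true}
          = {σ | σ ∈ G ∧ (σ ((⟨0, hg⟩ : Fin g), true)).2 = true} →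
      τ ((⟨0, hg⟩ : Fin g), true) = ((⟨0, hg⟩ : Fin g), true)) :
    ∀ i : Fin g, i ≠ ⟨0, hg⟩ → ∀ ε : Bool,
      ∃ σ, (σ ∈ G ∧ (σ ((⟨0, hg⟩ : Fin g), true)).2 = true) ∧ (σ (i, true)).2 = ε := by
  intro i hi ε
  by_contra hcon
  push Not at hcon
  obtain ⟨τ, hτ, hτq⟩ := htrans ((⟨0, hg⟩ : Fin g), true) (i, !ε)
  have key : ∀ σ, (σ ∈ G ∧ (σ ((⟨0, hg⟩ : Fin g), true)).2 = true) →
      (σ (i, !ε)).2 = true := by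
    intro σ hσ
    have h1 := hcon σ hσ
    have h2 := hsigned σ hσ.1 (i, true)
    cases ε
    · simpa using h1
    · simp at h1 h2
      simp [h2, h1]
  have hfix := hprim τ hτ (by
    apply Set.eq_of_subset_of_ncard_le
    · rintro _ ⟨σ, hσ, rfl⟩
      refine ⟨G.mul_mem hσ.1 hτ, ?_⟩
      simp only [Equiv.Perm.mul_apply, hτq]
      exact key σ hσ
    · rw [Set.ncard_image_of_injective _ (mul_left_injective τ)]
    · exact Set.toFinite _)
  rw [hτq] at hfix
  exact hi (congrArg Prod.fst hfix)
end

section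
/- With the signed-permutation setup (G ≤ W_g containing δ, acting transitively on {1,…,g}×{+1,−1}, with stabilizer H of (1,+1), positive set S, and primitivity condition that every τ ∈ G with Sτ = S lies in H), and with U ≤ ℤ^g the subgroup generated by the indicator vectors 1_{T(σ)} for σ ∈ G: if g = 2, then U = ℤ². -/
/-- The subgroup `U ≤ ℤ^g` generated by the indicator vectors `1_{T(σ)}`, `σ ∈ G`, where
`T(σ) = {i : σ(j,+1) = (i,−1) for some j}`. -/
def imageLattice (g : ℕ) (G : Subgroup (Equiv.Perm (Fin g × Bool))) :
    AddSubgroup (Fin g → ℤ) :=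
  AddSubgroup.closure
    {v | ∃ σ ∈ G, v = fun i => if ∃ j, σ (j, true) = (i, false) then 1 else 0}

/-- Lemma 7.9: in the signed-permutation setup with `g = 2`, the lattice `U` generated by
the indicator vectors `1_{T(σ)}`, `σ ∈ G`, is all of `ℤ²`. -/
theorem imageLattice_eq_top_of_two
    (G : Subgroup (Equiv.Perm (Fin 2 × Bool)))
    (hsigned : ∀ σ ∈ G, ∀ p : Fin 2 × Bool, σ (p.1, !p.2) = ((σ p).1, !(σ p).2))
    (hδ : signFlip 2 ∈ G)
    (htrans : ∀ p q : Fin 2 × Bool, ∃ σ ∈ G, σ p = q)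
    (hprim : ∀ τ ∈ G,
      (fun σ => σ * τ) '' {σ | σ ∈ G ∧ (σ ((0 : Fin 2), true)).2 = true}
          = {σ | σ ∈ G ∧ (σ ((0 : Fin 2), true)).2 = true} →
      τ ((0 : Fin 2), true) = ((0 : Fin 2), true)) :
    imageLattice 2 G = ⊤ := by
  have key : ∃ σ ∈ G, (σ ((0 : Fin 2), true)).2 ≠ (σ ((1 : Fin 2), true)).2 := by
    by_contra hcon
    push Not at hcon
    obtain ⟨τ, hτ, h01⟩ := htrans (0, true) (1, true)
    have h := hprim τ hτ (by
      ext ρ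
      simp only [Set.mem_image, Set.mem_setOf_eq]
      constructor
      · rintro ⟨σ, ⟨hσ, h1⟩, rfl⟩
        refine ⟨G.mul_mem hσ hτ, ?_⟩
        rw [Equiv.Perm.mul_apply, h01, ← hcon σ hσ, h1]
      · rintro ⟨hρ, h1⟩
        have hm : ρ * τ⁻¹ ∈ G := G.mul_mem hρ (G.inv_mem hτ)
        refine ⟨ρ * τ⁻¹, ⟨hm, ?_⟩, by simp⟩
        rw [hcon _ hm, ← h01]
        simpa using h1)
    rw [h01] at h
    simp at h
  obtain ⟨σ, hσ, hne⟩ := key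
  have hs0 := hsigned σ hσ (0, true)
  have hinj1 : σ (0, true) ≠ σ (1, true) := fun h => by
    have := σ.injective h
    simp at this
  have hinj2 : σ (0, false) ≠ σ (1, true) := fun h => by
    have := σ.injective h
    simp at this
  have m1 : (fun i => if ∃ j, σ (j, true) = (i, false) then 1 else 0 : Fin 2 → ℤ)
      ∈ imageLattice 2 G := AddSubgroup.subset_closure ⟨σ, hσ, rfl⟩
  have m2 : (fun i => if ∃ j, signFlip 2 (j, true) = (i, false) then 1 else 0 : Fin 2 → ℤ)
      ∈ imageLattice 2 G := AddSubgroup.subset_closure ⟨_, hδ, rfl⟩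
  have e2 : (fun i => if ∃ j, signFlip 2 (j, true) = (i, false) then 1 else 0 : Fin 2 → ℤ)
      = ![1, 1] := by
    funext i
    fin_cases i <;> simp [signFlip]
  rw [e2] at m2
  have e1 : (fun i => if ∃ j, σ (j, true) = (i, false) then 1 else 0 : Fin 2 → ℤ) = ![1, 0] ∨
      (fun i => if ∃ j, σ (j, true) = (i, false) then 1 else 0 : Fin 2 → ℤ) = ![0, 1] := by
    simp only [Fin.exists_fin_two]
    simp only [Bool.not_true] at hs0
    rw [hs0] at hinj2
    generalize σ (0, true) = x at *
    generalize σ (1, true) = y at *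
    clear * - hne hinj1 hinj2
    revert x y
    decide
  have m3 : (![1, 0] : Fin 2 → ℤ) ∈ imageLattice 2 G ∧ (![0, 1] : Fin 2 → ℤ) ∈ imageLattice 2 G := by
    rcases e1 with e | e <;> rw [e] at m1
    · exact ⟨m1, by simpa using sub_mem m2 m1⟩
    · refine ⟨?_, m1⟩
      have h10 : (![1, 0] : Fin 2 → ℤ) = ![1, 1] - ![0, 1] := by decide
      rw [h10]
      exact sub_mem m2 m1
  rw [eq_top_iff]
  intro v _
  have := add_mem (zsmul_mem m3.1 (v 0)) (zsmul_mem m3.2 (v 1))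
  convert this using 1
  funext i
  fin_cases i <;> simp
end

section
/- With the signed-permutation setup (G ≤ W_g containing δ, acting transitively on {1,…,g}×{+1,−1}, with stabilizer H of (1,+1), positive set S, and primitivity condition that every τ ∈ G with Sτ = S lies in H), and with U ≤ ℤ^g the subgroup generated by the indicator vectors 1_{T(σ)} for σ ∈ G: if g = 3, then U = ℤ³. -/
theorem aux_top (U : AddSubgroup (Fin 3 → ℤ)) (h1 : (![1,1,1] : Fin 3 → ℤ) ∈ U)
    (h : ∀ i j : Fin 3, i ≠ j → ∃ s : Fin 3 → Bool, s i ≠ s j ∧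
      (fun k => if s k = false then (1 : ℤ) else 0) ∈ U) : U = ⊤ := by
  have key : ∀ i j : Fin 3, i ≠ j →
      (Pi.single i 1 : Fin 3 → ℤ) ∈ U ∨ (Pi.single j 1 : Fin 3 → ℤ) ∈ U := by
    intro i j hij
    obtain ⟨s, hs, hU⟩ := h i j hij
    have hU' := U.sub_mem h1 hU
    have hd : ∀ i j : Fin 3, i ≠ j → ∀ s : Fin 3 → Bool, s i ≠ s j →
      ((fun k => if s k = false then (1 : ℤ) else 0) = Pi.single i 1 ∨
       (fun k => if s k = false then (1 : ℤ) else 0) = Pi.single j 1) ∨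
      (![1,1,1] - (fun k => if s k = false then (1 : ℤ) else 0) = Pi.single i 1 ∨
       ![1,1,1] - (fun k => if s k = false then (1 : ℤ) else 0) = Pi.single j 1) := by
      decide
    rcases hd i j hij s hs with (e | e) | (e | e)
    · rw [e] at hU; exact Or.inl hU
    · rw [e] at hU; exact Or.inr hU
    · rw [e] at hU'; exact Or.inl hU'
    · rw [e] at hU'; exact Or.inr hU'
  have hsum : (![1,1,1] : Fin 3 → ℤ) = Pi.single 0 1 + Pi.single 1 1 + Pi.single 2 1 := by
    decide
  have h01 := key 0 1 (by decide)
  have h02 := key 0 2 (by decide)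
  have h12 := key 1 2 (by decide)
  have all : (Pi.single 0 1 : Fin 3 → ℤ) ∈ U ∧ (Pi.single 1 1 : Fin 3 → ℤ) ∈ U ∧
      (Pi.single 2 1 : Fin 3 → ℤ) ∈ U := by
    rw [hsum] at h1
    have a : (Pi.single 0 1 : Fin 3 → ℤ) ∈ U → (Pi.single 1 1 : Fin 3 → ℤ) ∈ U →
        (Pi.single 2 1 : Fin 3 → ℤ) ∈ U := fun x y => by
      have := U.sub_mem h1 (U.add_mem x y)
      convert this using 1
      abel
    have b : (Pi.single 0 1 : Fin 3 → ℤ) ∈ U → (Pi.single 2 1 : Fin 3 → ℤ) ∈ U →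
        (Pi.single 1 1 : Fin 3 → ℤ) ∈ U := fun x y => by
      have := U.sub_mem h1 (U.add_mem x y)
      convert this using 1
      abel
    have c : (Pi.single 1 1 : Fin 3 → ℤ) ∈ U → (Pi.single 2 1 : Fin 3 → ℤ) ∈ U →
        (Pi.single 0 1 : Fin 3 → ℤ) ∈ U := fun x y => by
      have := U.sub_mem h1 (U.add_mem x y)
      convert this using 1
      abel
    tauto
  rw [eq_top_iff]
  intro v _
  have hv : v = v 0 • (Pi.single 0 1 : Fin 3 → ℤ) + v 1 • (Pi.single 1 1 : Fin 3 → ℤ)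
      + v 2 • (Pi.single 2 1 : Fin 3 → ℤ) := by
    ext i
    fin_cases i <;> simp
  rw [hv]
  exact U.add_mem (U.add_mem (U.zsmul_mem all.1 _) (U.zsmul_mem all.2.1 _))
    (U.zsmul_mem all.2.2 _)

/-- Lemma 7.10: in the signed-permutation setup with `g = 3`, the lattice `U` generated by
the indicator vectors `1_{T(σ)}`, `σ ∈ G`, is all of `ℤ³`. -/
theorem imageLattice_eq_top_of_three
    (G : Subgroup (Equiv.Perm (Fin 3 × Bool)))
    (hsigned : ∀ σ ∈ G, ∀ p : Fin 3 × Bool, σ (p.1, !p.2) = ((σ p).1, !(σ p).2))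
    (hδ : signFlip 3 ∈ G)
    (htrans : ∀ p q : Fin 3 × Bool, ∃ σ ∈ G, σ p = q)
    (hprim : ∀ τ ∈ G,
      (fun σ => σ * τ) '' {σ | σ ∈ G ∧ (σ ((0 : Fin 3), true)).2 = true}
          = {σ | σ ∈ G ∧ (σ ((0 : Fin 3), true)).2 = true} →
      τ ((0 : Fin 3), true) = ((0 : Fin 3), true)) :
    imageLattice 3 G = ⊤ := by
  -- points are separated by signs
  have sep0 : ∀ q : Fin 3 × Bool, q ≠ (0, true) →
      ∃ ρ ∈ G, (ρ q).2 ≠ (ρ ((0 : Fin 3), true)).2 := by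
    intro q hq
    by_contra hcon
    push Not at hcon
    obtain ⟨τ, hτ, hτq⟩ := htrans q (0, true)
    apply hq
    have hfix := hprim τ hτ ?_
    · exact τ.injective (hτq.trans hfix.symm)
    · have hq' : τ⁻¹ ((0 : Fin 3), true) = q := by
        rw [← hτq]; simp
      ext ρ
      constructor
      · rintro ⟨σ, ⟨hσ, hs⟩, rfl⟩
        have hm := G.mul_mem hσ hτ
        refine ⟨hm, ?_⟩
        have := hcon _ hm
        rw [← this]
        simpa [hτq] using hs
      · rintro ⟨hρ, hs⟩
        refine ⟨ρ * τ⁻¹, ⟨G.mul_mem hρ (G.inv_mem hτ), ?_⟩, by simp⟩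
        rw [Equiv.Perm.mul_apply, hq', hcon _ hρ, hs]
  have sep : ∀ p q : Fin 3 × Bool, q ≠ p → ∃ ρ ∈ G, (ρ q).2 ≠ (ρ p).2 := by
    intro p q hpq
    obtain ⟨σ, hσ, hp⟩ := htrans p (0, true)
    obtain ⟨ρ, hρ, h⟩ := sep0 (σ q) (fun h => hpq (σ.injective (h.trans hp.symm)))
    refine ⟨ρ * σ, G.mul_mem hρ hσ, ?_⟩
    simpa [hp] using h
  have mem : ∀ ρ ∈ G, (fun k => if (ρ (k, true)).2 = false then (1 : ℤ) else 0)
      ∈ imageLattice 3 G := by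
    intro ρ hρ
    apply AddSubgroup.subset_closure
    refine ⟨ρ⁻¹, G.inv_mem hρ, ?_⟩
    funext k
    have hk := hsigned ρ hρ (k, true)
    simp only [Bool.not_true] at hk
    have : (ρ (k, true)).2 = false ↔ ∃ j, ρ⁻¹ (j, true) = (k, false) := by
      constructor
      · intro h
        refine ⟨(ρ (k, true)).1, ?_⟩
        rw [Equiv.Perm.inv_eq_iff_eq, hk, h]
        rfl
      · rintro ⟨j, hj⟩
        rw [Equiv.Perm.inv_eq_iff_eq, hk] at hj
        simpa using (congrArg Prod.snd hj).symm
    simp only [this]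
  apply aux_top
  · have := mem _ hδ
    convert this using 1
    decide
  · intro i j hij
    obtain ⟨ρ, hρ, h⟩ := sep (j, true) (i, true) (by simpa using hij)
    exact ⟨fun k => (ρ (k, true)).2, h, mem ρ hρ⟩
end

section
/- Let F₂ = ℤ/2ℤ and let S₄ be the symmetric group on {1,2,3,4}. Let M = F₂⁴ with S₄ permuting the standard basis vectors a₁,a₂,a₃,a₄; let M₀ ⊆ M be the span of a₁+a₂+a₃+a₄ (a trivial submodule); let M₁ = M/M₀; and let M₂ ⊆ M₁ be the F₂[S₄]-submodule generated by the images of a₁+a₂ and a₁+a₃. Let P be the 3-element set of partitions of {1,2,3,4} into two pairs, with its natural S₄-action; let N = F₂^P be the corresponding permutation module with basis b₁,b₂,b₃; and let N₀ ⊆ N be the span of b₁+b₂+b₃. Then N/N₀ and M₂ are isomorphic as F₂[S₄]-modules, i.e. there is an S₄-equivariant F₂-linear isomorphism N/N₀ ≅ M₂. -/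
/-- The set of partitions of `{1,2,3,4}` into two pairs, encoded (S₄-equivariantly) as the
fixed-point-free involutions in `S₄`; the `S₄`-action is by conjugation. -/
def PairPartition : Type := {f : Equiv.Perm (Fin 4) // f * f = 1 ∧ ∀ i, f i ≠ i}

/-- The natural (conjugation) action of `S₄` on partitions of `{1,2,3,4}` into two pairs. -/
def partAct (σ : Equiv.Perm (Fin 4)) (f : PairPartition) : PairPartition :=
  ⟨σ * f.1 * σ⁻¹, by
    obtain ⟨h1, h2⟩ := f.2
    constructor
    · have h : σ * f.1 * σ⁻¹ * (σ * f.1 * σ⁻¹) = σ * (f.1 * f.1) * σ⁻¹ := by group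
      rw [h, h1, mul_one, mul_inv_cancel]
    · intro i hi
      have h3 : σ (f.1 (σ⁻¹ i)) = i := by
        simpa [Equiv.Perm.mul_apply] using hi
      have h4 : f.1 (σ⁻¹ i) = σ⁻¹ i := by
        have := congrArg (fun x => σ⁻¹ x) h3
        simpa using this
      exact h2 _ h4⟩

/-- `M₀`: the trivial submodule of `M = F₂⁴` spanned by `a₁+a₂+a₃+a₄`. -/
def Mzero : Submodule (ZMod 2) (Fin 4 → ZMod 2) :=
  Submodule.span (ZMod 2) {fun _ => 1}

/-- `M₂`: the `F₂[S₄]`-submodule of `M₁ = M/M₀` generated by the images of `a₁+a₂` and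
`a₁+a₃` (equivalently, spanned by all the images of `aᵢ+aⱼ`, `i ≠ j`). -/
def Mtwo : Submodule (ZMod 2) ((Fin 4 → ZMod 2) ⧸ Mzero) :=
  Submodule.span (ZMod 2)
    {x | ∃ i j : Fin 4, i ≠ j ∧
      x = Submodule.Quotient.mk (Pi.single i 1 + Pi.single j 1)}

/-- `N₀`: the trivial submodule of the permutation module `N = F₂^P` spanned by
`b₁+b₂+b₃`. -/
def Nzero : Submodule (ZMod 2) (PairPartition → ZMod 2) :=
  Submodule.span (ZMod 2) {fun _ => 1}

def rmP1 : PairPartition := ⟨Equiv.swap 0 1 * Equiv.swap 2 3, by decide⟩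
def rmP2 : PairPartition := ⟨Equiv.swap 0 2 * Equiv.swap 1 3, by decide⟩
def rmP3 : PairPartition := ⟨Equiv.swap 0 3 * Equiv.swap 1 2, by decide⟩

set_option maxRecDepth 100000 in
theorem rm_cases_aux : ∀ f : Equiv.Perm (Fin 4), (f * f = 1 ∧ ∀ i, f i ≠ i) →
    f = rmP1.1 ∨ f = rmP2.1 ∨ f = rmP3.1 := by decide

theorem rm_cases (f : PairPartition) : f = rmP1 ∨ f = rmP2 ∨ f = rmP3 := by
  rcases rm_cases_aux f.1 f.2 with h | h | h
  · exact Or.inl (Subtype.ext h)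
  · exact Or.inr (Or.inl (Subtype.ext h))
  · exact Or.inr (Or.inr (Subtype.ext h))

def rmVec (a b c : ZMod 2) : Fin 4 → ZMod 2 := ![a + b + c, a, b, c]

theorem rm_val (v : PairPartition → ZMod 2) (f : PairPartition) :
    v f = ![0, v rmP1, v rmP2, v rmP3] (f.1 0) := by
  rcases rm_cases f with h | h | h <;> subst h <;> rfl

def rmPhi : (PairPartition → ZMod 2) →ₗ[ZMod 2] (Fin 4 → ZMod 2) where
  toFun v := rmVec (v rmP1) (v rmP2) (v rmP3)
  map_add' v w := by
    ext i; fin_cases i <;> simp [rmVec]; ring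
  map_smul' r v := by
    ext i; fin_cases i <;> simp [rmVec]; ring

def rmL : (PairPartition → ZMod 2) →ₗ[ZMod 2] ((Fin 4 → ZMod 2) ⧸ Mzero) :=
  Mzero.mkQ ∘ₗ rmPhi

theorem rm_mem (x : Fin 4 → ZMod 2) : x ∈ Mzero ↔ ∃ k : ZMod 2, ∀ i, x i = k := by
  unfold Mzero
  rw [Submodule.mem_span_singleton]
  constructor
  · rintro ⟨k, rfl⟩
    exact ⟨k, fun i => by simp⟩
  · rintro ⟨k, h⟩
    exact ⟨k, by ext i; simp [h]⟩

set_option maxRecDepth 100000 in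
theorem rm_equiv_aux : ∀ (σ : Equiv.Perm (Fin 4)) (a b c : ZMod 2), ∃ k : ZMod 2, ∀ i,
    rmVec (![0, a, b, c] ((σ⁻¹ * rmP1.1 * σ) 0)) (![0, a, b, c] ((σ⁻¹ * rmP2.1 * σ) 0))
      (![0, a, b, c] ((σ⁻¹ * rmP3.1 * σ) 0)) i - rmVec a b c (σ⁻¹ i) = k := by
  decide

theorem rm_equiv (σ : Equiv.Perm (Fin 4)) (v : PairPartition → ZMod 2) :
    rmPhi (fun f => v (partAct σ⁻¹ f)) - (fun i => rmPhi v (σ⁻¹ i)) ∈ Mzero := by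
  rw [rm_mem]
  obtain ⟨k, hk⟩ := rm_equiv_aux σ (v rmP1) (v rmP2) (v rmP3)
  refine ⟨k, fun i => ?_⟩
  rw [← hk i]
  change rmVec (v (partAct σ⁻¹ rmP1)) (v (partAct σ⁻¹ rmP2)) (v (partAct σ⁻¹ rmP3)) i - _ = _
  rw [rm_val v (partAct σ⁻¹ rmP1), rm_val v (partAct σ⁻¹ rmP2), rm_val v (partAct σ⁻¹ rmP3)]
  simp only [partAct, inv_inv]
  rfl

theorem rm_ker_aux : ∀ a b c k : ZMod 2, (∀ i, rmVec a b c i = k) → a = k ∧ b = k ∧ c = k := by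
  decide

theorem rm_ker : LinearMap.ker rmL = Nzero := by
  ext v
  rw [LinearMap.mem_ker]
  change Submodule.Quotient.mk (rmPhi v) = 0 ↔ _
  rw [Submodule.Quotient.mk_eq_zero, rm_mem]
  unfold Nzero
  rw [Submodule.mem_span_singleton]
  constructor
  · rintro ⟨k, hk⟩
    obtain ⟨h1, h2, h3⟩ := rm_ker_aux _ _ _ _ hk
    refine ⟨k, funext fun f => ?_⟩
    rcases rm_cases f with h | h | h <;> subst h <;> simp [*]
  · rintro ⟨k, rfl⟩
    refine ⟨k, ?_⟩
    have : ∀ k : ZMod 2, ∀ i, rmVec (k * 1) (k * 1) (k * 1) i = k := by decide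
    exact this k

theorem rm_decomp : ∀ a b c : ZMod 2, rmVec a b c =
    a • (Pi.single 0 1 + Pi.single 1 1) + b • (Pi.single 0 1 + Pi.single 2 1)
      + c • (Pi.single 0 1 + Pi.single 3 1) := by decide

theorem rm_gen : ∀ i j : Fin 4, i ≠ j → ∃ a b c k : ZMod 2, ∀ l,
    (rmVec a b c - (Pi.single i 1 + Pi.single j 1) : Fin 4 → ZMod 2) l = k := by decide

theorem rm_range : LinearMap.range rmL = Mtwo := by
  apply le_antisymm
  · rintro _ ⟨v, rfl⟩
    change Mzero.mkQ (rmVec (v rmP1) (v rmP2) (v rmP3)) ∈ _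
    rw [rm_decomp, map_add, map_add, map_smul, map_smul, map_smul]
    refine add_mem (add_mem ?_ ?_) ?_ <;> refine Submodule.smul_mem _ _ (Submodule.subset_span ?_)
    · exact ⟨0, 1, by decide, rfl⟩
    · exact ⟨0, 2, by decide, rfl⟩
    · exact ⟨0, 3, by decide, rfl⟩
  · unfold Mtwo
    rw [Submodule.span_le]
    rintro _ ⟨i, j, hij, rfl⟩
    obtain ⟨a, b, c, h⟩ := rm_gen i j hij
    refine ⟨fun f => ![0, a, b, c] (f.1 0), ?_⟩
    change Submodule.Quotient.mk (rmVec a b c) = _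
    rw [Submodule.Quotient.eq, rm_mem]
    exact h

/-- The representation-theoretic computation underlying Lemma 6.1: `N/N₀` and `M₂` are
isomorphic as `F₂[S₄]`-modules, i.e. there is an `S₄`-equivariant `F₂`-linear
isomorphism `N/N₀ ≅ M₂`.  Equivariance is expressed on representatives: the action of
`σ` on `N` is `(σ • v) f = v (σ⁻¹ • f)` and on `M = F₂⁴` is `(σ • m) i = m (σ⁻¹ i)`. -/
theorem resolvent_module_iso :
    ∃ e : ((PairPartition → ZMod 2) ⧸ Nzero) ≃ₗ[ZMod 2] Mtwo,
      ∀ (σ : Equiv.Perm (Fin 4)) (v : PairPartition → ZMod 2) (m : Fin 4 → ZMod 2),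
        (Submodule.Quotient.mk m : (Fin 4 → ZMod 2) ⧸ Mzero)
            = (e (Submodule.Quotient.mk v) : (Fin 4 → ZMod 2) ⧸ Mzero) →
        ((e (Submodule.Quotient.mk (fun f => v (partAct σ⁻¹ f)))
              : (Fin 4 → ZMod 2) ⧸ Mzero))
          = Submodule.Quotient.mk (fun i => m (σ⁻¹ i)) := by
  let e := (Submodule.quotEquivOfEq _ _ rm_ker.symm).trans
    (rmL.quotKerEquivRange.trans (LinearEquiv.ofEq _ _ rm_range))
  have he : ∀ v, (e (Submodule.Quotient.mk v) : (Fin 4 → ZMod 2) ⧸ Mzero)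
      = Submodule.Quotient.mk (rmPhi v) := fun v => rfl
  refine ⟨e, fun σ v m h => ?_⟩
  rw [he] at h ⊢
  rw [Submodule.Quotient.eq, rm_mem] at h
  obtain ⟨k, hk⟩ := h
  have h2 : (fun i => rmPhi v (σ⁻¹ i)) - (fun i => m (σ⁻¹ i)) ∈ Mzero := by
    rw [rm_mem]
    refine ⟨-k, fun i => ?_⟩
    rw [← hk (σ⁻¹ i)]
    simp
  rw [Submodule.Quotient.eq]
  simpa using add_mem (rm_equiv σ v) h2
end
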